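/- arXiv:1310.7636 — 3 statements merged into one kernel-verified Lean document; each statement's English description precedes it below -/
import Mathlib

section
/- Let H be a real Hilbert space, K ⊆ H, and f, g : K → H with f(K) ⊆ g(K) and g(K) weakly compact and convex. Suppose that for every sequence (xₙ) ⊆ K, weak convergence of (g(xₙ)) to g(x) ∈ g(K) implies norm convergence of (g(xₙ) − f(xₙ)) to g(x) − f(x). Then f and g have a coincidence point: there exists x ∈ K with f(x) = g(x). -/
/-!
Write `C = g(K)` and let `T = f ∘ s`, where `s` is a right inverse of `g : K → C`. Then `T` maps
`C` into itself, and a fixed point of `T` is the image under `g` of a coincidence point. The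
hypothesis says that `A = id - T` sends weakly convergent sequences of `C` with limit in `C` to norm
convergent ones; in particular `A` and `T` are norm continuous on `C`, which is closed, bounded and
convex.

A point `a ∈ C` with `0 ≤ ⟪A a, z - a⟫` for `z = T a` satisfies `‖A a‖² ≤ 0`, so it is fixed.
Such a point is found by a Galerkin argument (`exists_fixedPoint_of_weakConv`). First `C` is cut
down to a nonempty closed convex `T`-invariant subset `C₀` that is norm separable
(`exists_separable_invariant`), with a dense sequence `d`. On the convex hull of `d 0, …, d n` the
variational inequality has a solution `y n` (`exists_variational_solution`). A subsequence
converges weakly to some `a ∈ C₀`; along it `A (y n) → A a` in norm, so the inequalities pass to the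
limit and give `0 ≤ ⟪A a, z - a⟫` for all `z = d i`, hence by density for all `z ∈ C₀`, in
particular for `z = T a`. Passing to `C₀` is what lets sequences replace nets, the hypothesis on
`f` and `g` being sequential.

The variational inequality on a finite-dimensional compact convex set says that
`x ↦ P (x - A x)` has a fixed point, `P` being the metric projection, and this is Brouwer's theorem.
Brouwer's theorem is proved after Milnor and Rogers: if `r` is a `C¹` retraction of the unit ball `B`
onto its sphere, then `J t = ∫_B det (1 + t (Dr - 1))` is a polynomial in `t`. For small `t ≥ 0`
the map `x + t (r x - x)` is a bijection of `B`, so `J t = vol B` by change of variables, hence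
`J 1 = vol B`; but `‖r‖ = 1` forces `det Dr = 0`, so `J 1 = 0` (`no_retraction`).
-/

open Filter Topology RealInnerProductSpace

/-- Weak convergence of a sequence: tested against all continuous linear functionals. -/
def WeakConv {X : Type*} [NormedAddCommGroup X] [NormedSpace ℝ X] (u : ℕ → X) (x : X) : Prop :=
  ∀ φ : X →L[ℝ] ℝ, Filter.Tendsto (fun n => φ (u n)) Filter.atTop (nhds (φ x))

/-- A set is weakly compact: its copy in the weak space is compact. -/
def WeaklyCompact {X : Type*} [NormedAddCommGroup X] [NormedSpace ℝ X] (S : Set X) : Prop :=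
  IsCompact (_root_.toWeakSpaceCLM ℝ X '' S)

open Set MeasureTheory Metric

/-! ### Metric projection -/

/-- The metric projection onto a complete convex set, with its variational characterization. -/
theorem exists_convex_projection {E : Type*} [NormedAddCommGroup E] [InnerProductSpace ℝ E]
    {C : Set E} (hne : C.Nonempty) (hcompl : IsComplete C) (hconv : Convex ℝ C) :
    ∃ P : E → E, (∀ x, P x ∈ C) ∧ (∀ x, ∀ z ∈ C, ⟪x - P x, z - P x⟫ ≤ 0) ∧
      LipschitzWith 1 P := by
  choose P hP hmin using fun x => exists_norm_eq_iInf_of_complete_convex hne hcompl hconv x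
  have hvar : ∀ x, ∀ z ∈ C, ⟪x - P x, z - P x⟫ ≤ 0 := fun x =>
    (norm_eq_iInf_iff_real_inner_le_zero hconv (hP x)).1 (hmin x)
  refine ⟨P, hP, hvar, LipschitzWith.of_dist_le_mul fun x y => ?_⟩
  have h1 := hvar x (P y) (hP y)
  have h2 := hvar y (P x) (hP x)
  have h3 : ‖P x - P y‖ * ‖P x - P y‖ ≤ ‖x - y‖ * ‖P x - P y‖ := by
    have h4 := real_inner_le_norm (x - y) (P x - P y)
    rw [← real_inner_self_eq_norm_mul_norm]
    have h5 : ⟪x - y, P x - P y⟫ - ⟪P x - P y, P x - P y⟫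
        = -⟪x - P x, P y - P x⟫ - ⟪y - P y, P x - P y⟫ := by
      simp only [inner_sub_left, inner_sub_right]; ring
    linarith
  rw [dist_eq_norm, dist_eq_norm, NNReal.coe_one, one_mul]
  rcases (norm_nonneg (P x - P y)).eq_or_lt with h | h
  · rw [← h]; positivity
  · exact le_of_mul_le_mul_right h3 h

theorem projection_eq_self {E : Type*} [NormedAddCommGroup E] [InnerProductSpace ℝ E]
    {C : Set E} {x p : E} (h : ∀ z ∈ C, ⟪x - p, z - p⟫ ≤ 0) (hx : x ∈ C) : p = x := by
  have := h x hx
  exact (sub_eq_zero.1 (real_inner_self_nonpos.1 this)).symm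

/-! ### No smooth retraction of the ball onto the sphere -/

/-- `t ↦ det (1 + t A)` is a polynomial of degree at most the dimension. -/
theorem exists_poly_det {E : Type*} [NormedAddCommGroup E] [NormedSpace ℝ E]
    [FiniteDimensional ℝ E] (A : E →L[ℝ] E) :
    ∃ p : Polynomial ℝ, p.natDegree ≤ Module.finrank ℝ E ∧
      ∀ t : ℝ, p.eval t = (ContinuousLinearMap.id ℝ E + t • A).det := by
  classical
  let b := Module.finBasis ℝ E
  let M := LinearMap.toMatrix b b (A : E →ₗ[ℝ] E)
  refine ⟨((Polynomial.X : Polynomial ℝ) • M.map Polynomial.C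
    + (1 : Matrix (Fin (Module.finrank ℝ E)) (Fin (Module.finrank ℝ E)) ℝ).map Polynomial.C).det,
    ?_, fun t => ?_⟩
  · simpa using Polynomial.natDegree_det_X_add_C_le M (1 : Matrix (Fin (Module.finrank ℝ E)) (Fin (Module.finrank ℝ E)) ℝ)
  · rw [ContinuousLinearMap.det, ← LinearMap.det_toMatrix b, ← Polynomial.coe_evalRingHom,
      RingHom.map_det]
    congr 1
    ext i j
    simp [M, Matrix.one_apply, LinearMap.toMatrix_apply, Finsupp.single_apply, add_comm, eq_comm]
    split_ifs <;> simp [mul_comm]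

/-- A small Lipschitz perturbation of the identity that fixes the unit sphere and maps the closed unit
ball into itself is a bijection of the ball. For surjectivity, extend `u` by `u ∘ P` with `P` the
projection onto the ball, and solve `x = y - t • u (P x)` by contraction; `x` lies in the ball since
otherwise `P x` is on the sphere, where `u` vanishes. -/
theorem image_perturb_closedBall {E : Type*} [NormedAddCommGroup E] [InnerProductSpace ℝ E]
    [CompleteSpace E] {u : E → E} {L : NNReal} {t : ℝ}
    (hu : LipschitzOnWith L u (closedBall 0 1)) (hsph : ∀ x ∈ sphere (0 : E) 1, u x = 0)
    (hmaps : ∀ x ∈ closedBall (0 : E) 1, x + t • u x ∈ closedBall (0 : E) 1)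
    (ht : |t| * L < 1) :
    InjOn (fun x => x + t • u x) (closedBall 0 1) ∧
      (fun x => x + t • u x) '' closedBall 0 1 = closedBall 0 1 := by
  constructor
  · intro x hx y hy hxy
    have h1 : x - y = t • (u y - u x) := by
      simp only at hxy
      rw [smul_sub, sub_eq_sub_iff_add_eq_add, hxy, add_comm]
    have h2 : ‖x - y‖ ≤ |t| * L * ‖x - y‖ := by
      have := hu.dist_le_mul y hy x hx
      rw [dist_eq_norm, dist_eq_norm, norm_sub_rev y x] at this
      calc ‖x - y‖ = |t| * ‖u y - u x‖ := by rw [h1, norm_smul, Real.norm_eq_abs]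
        _ ≤ |t| * (L * ‖x - y‖) := by gcongr
        _ = _ := by ring
    have h3 : ‖x - y‖ ≤ 0 := by
      by_contra! h
      nlinarith
    exact sub_eq_zero.1 (norm_le_zero_iff.1 h3)
  · refine Subset.antisymm (image_subset_iff.2 hmaps) fun y hy => ?_
    obtain ⟨P, hP, hvar, hlip⟩ := exists_convex_projection (C := closedBall (0 : E) 1)
      ⟨0, by simp⟩ isClosed_closedBall.isComplete (convex_closedBall 0 1)
    have hcontr : ContractingWith (‖t‖₊ * L) (fun x => y - t • u (P x)) := by
      refine ⟨?_, LipschitzWith.of_dist_le_mul fun a b => ?_⟩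
      · rw [← NNReal.coe_lt_coe]; simpa using ht
      · have h1 := hu.dist_le_mul (P a) (hP a) (P b) (hP b)
        have h2 := hlip.dist_le_mul a b
        rw [dist_sub_left, dist_smul₀]
        push_cast
        calc ‖t‖ * dist (u (P a)) (u (P b)) ≤ ‖t‖ * (L * (1 * dist a b)) := by
              gcongr
              exact h1.trans (by gcongr; simpa using h2)
          _ = _ := by rw [one_mul, mul_assoc]
    let x := hcontr.fixedPoint
    have hx : y - t • u (P x) = x := hcontr.fixedPoint_isFixedPt
    have hxB : x ∈ closedBall (0 : E) 1 := by
      rcases (mem_closedBall_zero_iff.1 (hP x)).lt_or_eq with h | h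
      · -- a projection in the open ball is the point itself: move from `P x` towards `x`
        have hw : x - P x = 0 := by
          by_contra hw
          have hw' : 0 < ‖x - P x‖ := norm_pos_iff.2 hw
          set ε := (1 - ‖P x‖) / ‖x - P x‖
          have hε : 0 < ε := div_pos (by linarith) hw'
          have := hvar x (P x + ε • (x - P x)) (by
            rw [mem_closedBall_zero_iff]
            calc _ ≤ ‖P x‖ + ‖ε • (x - P x)‖ := norm_add_le _ _
              _ = ‖P x‖ + ε * ‖x - P x‖ := by rw [norm_smul, Real.norm_of_nonneg hε.le]
              _ = 1 := by rw [div_mul_cancel₀ _ hw'.ne']; ring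
              _ ≤ 1 := le_rfl)
          rw [add_sub_cancel_left, inner_smul_right, real_inner_self_eq_norm_mul_norm] at this
          have : 0 < ε * (‖x - P x‖ * ‖x - P x‖) := by positivity
          linarith
        rw [sub_eq_zero.1 hw]; exact hP x
      · rw [hsph (P x) (by simpa using h), smul_zero, sub_zero] at hx
        rwa [← hx]
    refine ⟨x, hxB, ?_⟩
    have hPx : P x = x := projection_eq_self (hvar x) hxB
    rw [hPx] at hx
    exact (sub_eq_iff_eq_add.1 hx).symm

/-- There is no `C¹` retraction of the closed unit ball onto its sphere (Milnor–Rogers). -/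
theorem no_retraction {E : Type*} [NormedAddCommGroup E] [InnerProductSpace ℝ E]
    [FiniteDimensional ℝ E] {r : E → E} (hr : ∀ x ∈ closedBall (0 : E) 1, ContDiffAt ℝ 1 r x)
    (hmaps : ∀ x ∈ closedBall (0 : E) 1, ‖r x‖ = 1)
    (hid : ∀ x ∈ sphere (0 : E) 1, r x = x) : False := by
  classical
  let _ : MeasurableSpace E := borel E
  have : BorelSpace E := ⟨rfl⟩
  have : ProperSpace E := FiniteDimensional.proper ℝ E
  have : Nontrivial E := by
    refine ⟨r 0, 0, fun h => ?_⟩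
    have := hmaps 0 (by simp)
    simp [h] at this
  set B := closedBall (0 : E) 1
  let u : E → E := fun x => r x - x
  let A : E → E →L[ℝ] E := fun x => fderiv ℝ r x - ContinuousLinearMap.id ℝ E
  have hcompB : IsCompact B := isCompact_closedBall 0 1
  have hder : ∀ x ∈ B, HasFDerivAt u (A x) x := fun x hx =>
    ((hr x hx).differentiableAt one_ne_zero).hasFDerivAt.sub (hasFDerivAt_id x)
  have hAcont : ContinuousOn A B := fun x hx =>
    (((hr x hx).continuousAt_fderiv one_ne_zero).sub continuousAt_const).continuousWithinAt
  obtain ⟨L, hL⟩ := hcompB.exists_bound_of_continuousOn hAcont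
  have hL0 : 0 ≤ L := (norm_nonneg _).trans (hL 0 (by simp [B]))
  lift L to NNReal using hL0
  have hlip : LipschitzOnWith L u B := by
    refine Convex.lipschitzOnWith_of_nnnorm_hasFDerivWithin_le
      (fun x hx => (hder x hx).hasFDerivWithinAt) (fun x hx => ?_) (convex_closedBall 0 1)
    exact_mod_cast hL x hx
  have hid' : ∀ x ∈ sphere (0 : E) 1, u x = 0 := fun x hx => by simp [u, hid x hx]
  -- a neighbourhood of the identity on which the determinant is positive
  obtain ⟨ε, hε, hdet⟩ : ∃ ε > 0, ∀ T : E →L[ℝ] E,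
      ‖T‖ < ε → 0 < (ContinuousLinearMap.id ℝ E + T).det := by
    have h1 : ContinuousAt (fun T : E →L[ℝ] E => (ContinuousLinearMap.id ℝ E + T).det) 0 :=
      (ContinuousLinearMap.continuous_det.comp (continuous_const.add continuous_id)).continuousAt
    have h2 : ∀ᶠ T in 𝓝 (0 : E →L[ℝ] E), 0 < (ContinuousLinearMap.id ℝ E + T).det := by
      refine h1.eventually (lt_mem_nhds ?_)
      simp [ContinuousLinearMap.det]
    obtain ⟨ε, hε, h⟩ := Metric.eventually_nhds_iff.1 h2
    exact ⟨ε, hε, fun T hT => h (by simpa using hT)⟩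
  let J : ℝ → ℝ := fun t => ∫ x in B, (ContinuousLinearMap.id ℝ E + t • A x).det
  have hint : ∀ t : ℝ, IntegrableOn (fun x => (ContinuousLinearMap.id ℝ E + t • A x).det) B := by
    intro t
    refine ContinuousOn.integrableOn_compact hcompB ?_
    exact ContinuousLinearMap.continuous_det.comp_continuousOn
      (continuousOn_const.add (hAcont.const_smul t))
  obtain ⟨δ, hδ, hδ1, hδL, hδε⟩ : ∃ δ : ℝ, 0 < δ ∧ δ ≤ 1 ∧ δ * L < 1 ∧ δ * L < ε := by
    have hm : 0 < min 1 ε := lt_min one_pos hε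
    have hpos : (0 : ℝ) < L + 1 := by positivity
    have hlt : min 1 (min 1 ε / (L + 1)) * L < min 1 ε := by
      calc min 1 (min 1 ε / (L + 1)) * L ≤ min 1 ε / (L + 1) * L := by
            gcongr; exact min_le_right _ _
        _ < min 1 ε / (L + 1) * (L + 1) := by
            have := div_pos hm hpos
            nlinarith
        _ = min 1 ε := div_mul_cancel₀ _ hpos.ne'
    exact ⟨min 1 (min 1 ε / (L + 1)), lt_min one_pos (div_pos hm hpos), min_le_left _ _,
      hlt.trans_le (min_le_left _ _), hlt.trans_le (min_le_right _ _)⟩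
  have hJsmall : ∀ t, 0 ≤ t → t ≤ δ → J t = volume.real B := by
    intro t ht0 htδ
    have htL : |t| * L < 1 := by
      rw [abs_of_nonneg ht0]
      exact (mul_le_mul_of_nonneg_right htδ L.coe_nonneg).trans_lt hδL
    have hmapst : ∀ x ∈ B, x + t • u x ∈ B := by
      intro x hx
      have : x + t • u x = (1 - t) • x + t • r x := by simp only [u]; module
      rw [this]
      exact convex_closedBall (0 : E) 1 hx (mem_closedBall_zero_iff.2 (hmaps x hx).le)
        (by linarith) ht0 (by ring)
    obtain ⟨hinj, himg⟩ := image_perturb_closedBall hlip hid' hmapst htL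
    have hcv := integral_image_eq_integral_abs_det_fderiv_smul volume
      measurableSet_closedBall (fun x hx =>
        ((hasFDerivAt_id x).add ((hder x hx).const_smul t)).hasFDerivWithinAt) hinj
      (fun _ => (1 : ℝ))
    erw [himg] at hcv
    simp only [smul_eq_mul, mul_one, integral_const, MeasurableSet.univ, measureReal_restrict_apply,
      univ_inter] at hcv
    rw [hcv]
    refine setIntegral_congr_fun measurableSet_closedBall fun x hx => ?_
    refine (abs_of_pos (hdet _ ?_)).symm
    rw [norm_smul, Real.norm_of_nonneg ht0]
    calc t * ‖A x‖ ≤ δ * L := mul_le_mul htδ (hL x hx) (norm_nonneg _) hδ.le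
      _ < ε := hδε
  -- `J` is a polynomial function of degree at most `n`, recovered by interpolation at `n + 1` nodes
  have hJ1 : J 1 = volume.real B := by
    set n := Module.finrank ℝ E
    let s := Finset.range (n + 1)
    let v : ℕ → ℝ := fun k => δ / (k + 1)
    have hv : InjOn v s := by
      intro a _ b _ hab
      have ha : (0 : ℝ) < a + 1 := by positivity
      have hb : (0 : ℝ) < b + 1 := by positivity
      simp only [v, div_eq_div_iff ha.ne' hb.ne'] at hab
      have := mul_left_cancel₀ hδ.ne' hab
      exact_mod_cast (add_right_cancel this).symm
    have hinterp : ∀ p : Polynomial ℝ, p.natDegree ≤ n →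
        p.eval 1 = ∑ k ∈ s, p.eval (v k) * (Lagrange.basis s v k).eval 1 := by
      intro p hp
      have hdeg : p.degree < s.card := by
        refine Polynomial.degree_le_natDegree.trans_lt ?_
        simp only [s, Finset.card_range]
        exact_mod_cast Nat.lt_succ_of_le hp
      conv_lhs => rw [Lagrange.eq_interpolate hv hdeg, Lagrange.interpolate_apply]
      simp [Polynomial.eval_finsetSum]
    have hv' : ∀ k, 0 ≤ v k ∧ v k ≤ δ := fun k =>
      ⟨by positivity, div_le_self hδ.le (by simp)⟩
    calc J 1 = ∫ x in B, ∑ k ∈ s, (ContinuousLinearMap.id ℝ E + v k • A x).det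
            * (Lagrange.basis s v k).eval 1 := by
          refine integral_congr_ae (ae_of_all _ fun x => ?_)
          obtain ⟨p, hp, hpe⟩ := exists_poly_det (A x)
          have := hinterp p hp
          simpa only [hpe] using this
      _ = ∑ k ∈ s, J (v k) * (Lagrange.basis s v k).eval 1 := by
          rw [integral_finsetSum _ fun k _ => (hint (v k)).mul_const _]
          simp only [integral_mul_const, J]
      _ = ∑ k ∈ s, volume.real B * (Lagrange.basis s v k).eval 1 := by
          simp only [hJsmall _ (hv' _).1 (hv' _).2]
      _ = volume.real B := by
          have := hinterp 1 (by simp)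
          simp only [Polynomial.eval_one, one_mul] at this
          rw [← Finset.mul_sum, ← this, mul_one]
  have hJ0 : J 1 = 0 := by
    have hball : B =ᵐ[volume] ball (0 : E) 1 :=
      (ae_eq_of_subset_of_measure_ge ball_subset_closedBall
        (Measure.addHaar_closedBall_eq_addHaar_ball volume (0 : E) 1).le
        measurableSet_ball.nullMeasurableSet measure_closedBall_lt_top.ne).symm
    simp only [J]
    rw [setIntegral_congr_set hball]
    refine setIntegral_eq_zero_of_forall_eq_zero fun x hx => ?_
    have hxB := ball_subset_closedBall hx
    have hrd := ((hr x hxB).differentiableAt one_ne_zero).hasFDerivAt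
    -- the range of the derivative is orthogonal to `r x`
    have horth : ∀ w, ⟪r x, fderiv ℝ r x w⟫ = 0 := by
      intro w
      have h1 := hrd.norm_sq
      have h2 : (fun y => ‖r y‖ ^ 2) =ᶠ[𝓝 x] fun _ => (1 : ℝ) := by
        filter_upwards [isOpen_ball.mem_nhds hx] with y hy
        rw [hmaps y (ball_subset_closedBall hy), one_pow]
      have h3 := (h1.congr_of_eventuallyEq h2.symm).unique (hasFDerivAt_const (1 : ℝ) x)
      have h4 := DFunLike.congr_fun h3 w
      simpa using h4
    have : ContinuousLinearMap.id ℝ E + (1 : ℝ) • A x = fderiv ℝ r x := by simp [A]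
    rw [this, ContinuousLinearMap.det]
    by_contra hne
    have hsurj := (LinearEquiv.ofIsUnitDet (f := (fderiv ℝ r x : E →ₗ[ℝ] E))
      (v := Module.finBasis ℝ E) (v' := Module.finBasis ℝ E)
      (by rw [LinearMap.det_toMatrix]; exact isUnit_iff_ne_zero.2 hne)).surjective
    obtain ⟨w, hw⟩ := hsurj (r x)
    have hw' : fderiv ℝ r x w = r x := hw
    have := horth w
    rw [hw', real_inner_self_eq_norm_mul_norm, hmaps x hxB] at this
    norm_num at this
  have hvol : 0 < volume.real B := by
    refine ENNReal.toReal_pos (measure_closedBall_pos _ _ one_pos).ne' measure_closedBall_lt_top.ne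
  rw [hJ0] at hJ1
  exact hvol.ne hJ1

/-! ### Brouwer's fixed point theorem -/

/-- Brouwer's theorem for `C¹` maps. Without a fixed point, sending `x` to the point where the ray from
`f x` through `x` leaves the ball is a `C¹` retraction onto the sphere. -/
theorem brouwer_contDiff {E : Type*} [NormedAddCommGroup E] [InnerProductSpace ℝ E]
    [FiniteDimensional ℝ E] {f : E → E} (hf : ContDiff ℝ 1 f)
    (hmaps : ∀ x ∈ closedBall (0 : E) 1, ‖f x‖ ≤ 1) :
    ∃ x ∈ closedBall (0 : E) 1, f x = x := by
  by_contra! hfix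
  -- `l x` is the nonnegative root of `a l² + 2 b l - c = 0`, that is of `‖x + l • (x - f x)‖ = 1`
  let a : E → ℝ := fun x => ⟪x - f x, x - f x⟫
  let b : E → ℝ := fun x => ⟪x, x - f x⟫
  let c : E → ℝ := fun x => 1 - ⟪x, x⟫
  let l : E → ℝ := fun x => (√(b x ^ 2 + a x * c x) - b x) / a x
  have hx1 : ∀ x ∈ closedBall (0 : E) 1, ⟪x, x⟫ ≤ 1 := fun x hx => by
    rw [real_inner_self_eq_norm_sq]
    exact pow_le_one₀ (norm_nonneg _) (mem_closedBall_zero_iff.1 hx)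
  have ha : ∀ x ∈ closedBall (0 : E) 1, 0 < a x := fun x hx =>
    real_inner_self_pos.2 (sub_ne_zero.2 (hfix x hx).symm)
  have hb : ∀ x ∈ closedBall (0 : E) 1, ⟪x, x⟫ = 1 → 0 < b x := by
    intro x hx h1
    have h2 := ha x hx
    have h3 : ⟪f x, f x⟫ ≤ 1 := by
      rw [real_inner_self_eq_norm_sq]
      exact pow_le_one₀ (norm_nonneg _) (hmaps x hx)
    simp only [a, b, inner_sub_left, inner_sub_right, real_inner_comm x (f x)] at h2 ⊢
    rw [h1] at h2 ⊢
    linarith [real_inner_comm x (f x)]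
  have hD : ∀ x ∈ closedBall (0 : E) 1, 0 < b x ^ 2 + a x * c x := by
    intro x hx
    rcases (hx1 x hx).lt_or_eq with h | h
    · have := mul_pos (ha x hx) (show 0 < c x by simp only [c]; linarith)
      positivity
    · have := hb x hx h
      simp only [c, h, sub_self, mul_zero, add_zero]
      positivity
  refine no_retraction (r := fun x => x + l x • (x - f x)) (fun x hx => ?_) (fun x hx => ?_)
    (fun x hx => ?_)
  · have hd : ContDiff ℝ 1 fun x => x - f x := contDiff_id.sub hf
    have ha' : ContDiff ℝ 1 a := hd.inner ℝ hd
    have hb' : ContDiff ℝ 1 b := contDiff_id.inner ℝ hd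
    have hc' : ContDiff ℝ 1 c := contDiff_const.sub (contDiff_id.inner ℝ contDiff_id)
    have hl : ContDiffAt ℝ 1 l x :=
      ((((hb'.pow 2).add (ha'.mul hc')).contDiffAt.sqrt (hD x hx).ne').sub hb'.contDiffAt).div
        ha'.contDiffAt (ha x hx).ne'
    exact contDiffAt_id.add (hl.smul hd.contDiffAt)
  · have hs := Real.sq_sqrt (hD x hx).le
    have hl : a x * l x = √(b x ^ 2 + a x * c x) - b x := mul_div_cancel₀ _ (ha x hx).ne'
    have hquad : a x * l x ^ 2 + 2 * b x * l x - c x = 0 := by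
      refine mul_left_cancel₀ (ha x hx).ne' ?_
      have : √(b x ^ 2 + a x * c x) = a x * l x + b x := by linarith
      rw [this] at hs
      linear_combination hs
    have hn : ‖x + l x • (x - f x)‖ ^ 2 = 1 := by
      rw [norm_add_sq_real, norm_smul, mul_pow, inner_smul_right, Real.norm_eq_abs, sq_abs,
        ← real_inner_self_eq_norm_sq, ← real_inner_self_eq_norm_sq]
      simp only [a, b, c] at hquad
      linarith
    exact (pow_eq_one_iff_of_nonneg (norm_nonneg _) two_ne_zero).1 hn
  · have hxB := sphere_subset_closedBall hx
    have h1 : ⟪x, x⟫ = 1 := by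
      rw [real_inner_self_eq_norm_sq, mem_sphere_zero_iff_norm.1 hx, one_pow]
    have hl : l x = 0 := by
      simp only [l, c, h1, sub_self, mul_zero, add_zero, Real.sqrt_sq (hb x hxB h1).le, zero_div]
    simp [hl]

/-- Brouwer's theorem for a continuous map of the whole space into the unit ball: otherwise `‖f x - x‖`
is bounded below on the ball, and a smooth approximation of `f` would contradict the `C¹` case. -/
theorem brouwer_continuous {E : Type*} [NormedAddCommGroup E] [InnerProductSpace ℝ E]
    [FiniteDimensional ℝ E] {f : E → E} (hf : Continuous f) (hmaps : ∀ x, ‖f x‖ ≤ 1) :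
    ∃ x, f x = x := by
  have : ProperSpace E := FiniteDimensional.proper ℝ E
  obtain ⟨x, hx, hmin⟩ := (isCompact_closedBall (0 : E) 1).exists_isMinOn ⟨0, by simp⟩
    (f := fun x => ‖f x - x‖) (by fun_prop)
  refine ⟨x, by_contra fun hne => ?_⟩
  set m := ‖f x - x‖
  have hm : 0 < m := norm_pos_iff.2 (sub_ne_zero.2 hne)
  set ε := m / 3
  have hε : 0 < ε := by positivity
  obtain ⟨g, hg, hgf, -⟩ := hf.exists_contDiff_approx 1 (ε := fun _ => ε) continuous_const
    fun _ => hε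
  have hg1 : ∀ x, ‖g x‖ ≤ 1 + ε := fun x => by
    have h1 := (hgf x).le
    rw [dist_eq_norm] at h1
    linarith [norm_le_norm_add_norm_sub' (g x) (f x), hmaps x]
  have h1ε : 0 < 1 + ε := by linarith
  -- the factor `(1 + ε)⁻¹` brings the values of the approximation back into the ball
  obtain ⟨y, hy, hfix⟩ := brouwer_contDiff (f := fun x => (1 + ε)⁻¹ • g x)
    (contDiff_const.smul hg) fun x _ => by
      rw [norm_smul, norm_inv, Real.norm_of_nonneg h1ε.le, inv_mul_le_iff₀ h1ε, mul_one]
      exact hg1 x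
  have hgy : g y = (1 + ε) • y := by rw [← hfix, smul_inv_smul₀ h1ε.ne', hfix]
  have h2 : ‖g y - y‖ ≤ ε := by
    have : g y - y = ε • y := by rw [hgy]; module
    rw [this, norm_smul, Real.norm_of_nonneg hε.le]
    exact mul_le_of_le_one_right hε.le (mem_closedBall_zero_iff.1 hy)
  have h3 : m ≤ ‖f y - y‖ := hmin hy
  have h4 := (hgf y).le
  rw [dist_eq_norm, norm_sub_rev] at h4
  have h5 := norm_sub_le_norm_sub_add_norm_sub (f y) (g y) y
  simp only [ε] at h2 h4
  linarith

theorem brouwer_compact_convex {E : Type*} [NormedAddCommGroup E] [InnerProductSpace ℝ E]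
    [FiniteDimensional ℝ E] {C : Set E} (hne : C.Nonempty) (hC : IsCompact C)
    (hconv : Convex ℝ C) {f : E → E} (hf : ContinuousOn f C) (hmaps : MapsTo f C C) :
    ∃ x ∈ C, f x = x := by
  obtain ⟨P, hP, hvar, hlip⟩ := exists_convex_projection hne hC.isComplete hconv
  obtain ⟨R, hR0, hR⟩ := hC.isBounded.exists_pos_norm_le
  obtain ⟨x, hx⟩ := brouwer_continuous (f := fun x => R⁻¹ • f (P (R • x)))
    ((hf.comp_continuous (hlip.continuous.comp (continuous_const_smul R))
      fun x => hP _).const_smul R⁻¹) fun x => by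
      rw [norm_smul, norm_inv, Real.norm_of_nonneg hR0.le, inv_mul_le_iff₀ hR0, mul_one]
      exact hR _ (hmaps (hP _))
  have h1 : f (P (R • x)) = R • x := by
    conv_rhs => rw [← hx]
    exact (smul_inv_smul₀ hR0.ne' _).symm
  have h2 : R • x ∈ C := h1 ▸ hmaps (hP _)
  rw [projection_eq_self (hvar _) h2] at h1
  exact ⟨_, h2, h1⟩

/-- The Hartman–Stampacchia theorem on the convex hull of a finite set. -/
theorem exists_variational_solution {H : Type*} [NormedAddCommGroup H] [InnerProductSpace ℝ H]
    {F : Set H} (hF : F.Finite) (hne : F.Nonempty) {A : H → H}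
    (hA : ContinuousOn A (convexHull ℝ F)) :
    ∃ y ∈ convexHull ℝ F, ∀ z ∈ convexHull ℝ F, 0 ≤ ⟪A y, z - y⟫ := by
  have hcomp : IsCompact (convexHull ℝ F) := hF.isCompact_convexHull ℝ
  obtain ⟨P, hP, hvar, hlip⟩ := exists_convex_projection (hne.mono (subset_convexHull ℝ F))
    hcomp.isComplete (convex_convexHull ℝ F)
  let V := Submodule.span ℝ F
  have : FiniteDimensional ℝ V := FiniteDimensional.span_of_finite ℝ hF
  have hV : convexHull ℝ F ⊆ V := convexHull_min Submodule.subset_span V.convex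
  have hemb : Topology.IsClosedEmbedding (V.subtypeL : V → H) :=
    (Submodule.closed_of_finiteDimensional V).isClosedEmbedding_subtypeVal
  obtain ⟨z₀, hz₀⟩ := hne
  obtain ⟨x, hx, hfix⟩ := brouwer_compact_convex
    (C := V.subtypeL ⁻¹' convexHull ℝ F)
    (f := fun x => ⟨P (x - A x), hV (hP _)⟩)
    ⟨⟨z₀, Submodule.subset_span hz₀⟩, subset_convexHull ℝ F hz₀⟩
    (hemb.isCompact_preimage hcomp) ((convex_convexHull ℝ F).linear_preimage V.subtype)
    (by
      refine Topology.IsInducing.subtypeVal.continuousOn_iff.2 ?_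
      refine hlip.continuous.comp_continuousOn (continuous_subtype_val.continuousOn.sub ?_)
      exact hA.comp continuous_subtype_val.continuousOn fun x hx => hx)
    (fun x _ => hP _)
  refine ⟨x, hx, fun z hz => ?_⟩
  have h1 : P (x - A x) = x := congrArg Subtype.val hfix
  have h2 := hvar (x - A x) z hz
  rw [h1, sub_sub_cancel_left, inner_neg_left] at h2
  linarith

/-! ### Weak convergence of sequences -/

theorem weakConv_iff_inner {H : Type*} [NormedAddCommGroup H] [InnerProductSpace ℝ H]
    [CompleteSpace H] {y : ℕ → H} {a : H} :
    WeakConv y a ↔ ∀ v : H, Tendsto (fun n => ⟪v, y n⟫) atTop (𝓝 ⟪v, a⟫) := by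
  refine ⟨fun h v => h (innerSL ℝ v), fun h φ => ?_⟩
  have := h ((InnerProductSpace.toDual ℝ H).symm φ)
  simpa only [InnerProductSpace.toDual_symm_apply] using this

/-- Bounded sequences in a Hilbert space have weakly convergent subsequences. -/
theorem exists_weakConv_subseq {H : Type*} [NormedAddCommGroup H] [InnerProductSpace ℝ H]
    [CompleteSpace H] {y : ℕ → H} {R : ℝ} (hR : ∀ n, ‖y n‖ ≤ R) :
    ∃ a, ∃ φ : ℕ → ℕ, StrictMono φ ∧ WeakConv (y ∘ φ) a := by
  -- sequential Banach-Alaoglu in the closed separable subspace spanned by the sequence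
  let M := (Submodule.span ℝ (range y)).topologicalClosure
  have hyM : ∀ n, y n ∈ M := fun n =>
    Submodule.le_topologicalClosure _ (Submodule.subset_span (mem_range_self n))
  have : CompleteSpace M := (Submodule.isClosed_topologicalClosure _).completeSpace_coe
  have : TopologicalSpace.SeparableSpace M :=
    (countable_range y).isSeparable.span.closure.separableSpace
  let w : ℕ → WeakDual ℝ M := fun n =>
    StrongDual.toWeakDual (InnerProductSpace.toDual ℝ M ⟨y n, hyM n⟩)
  obtain ⟨l, -, φ, hφ, hlim⟩ := WeakDual.isSeqCompact_closedBall ℝ M 0 R (x := w) fun n => by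
    simpa [w] using hR n
  refine ⟨(InnerProductSpace.toDual ℝ M).symm (WeakDual.toStrongDual l), φ, hφ,
    weakConv_iff_inner.2 fun v => ?_⟩
  have key : ∀ m : M, ⟪v, (m : H)⟫ = ⟪m, M.orthogonalProjectionOnto v⟫ := fun m => by
    rw [real_inner_comm, Submodule.inner_orthogonalProjectionOnto_eq_of_mem_left]
  simp only [Function.comp_apply]
  have h1 := (WeakDual.eval_continuous (M.orthogonalProjectionOnto v)).tendsto l |>.comp hlim
  rw [key, InnerProductSpace.toDual_symm_apply]
  refine (tendsto_congr fun n => ?_).1 h1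
  exact (key ⟨y (φ n), hyM _⟩).symm

theorem WeakConv.mem_of_closed_convex {H : Type*} [NormedAddCommGroup H] [InnerProductSpace ℝ H]
    [CompleteSpace H] {y : ℕ → H} {a : H} (h : WeakConv y a) {C : Set H} (hC : IsClosed C)
    (hconv : Convex ℝ C) (hy : ∀ n, y n ∈ C) : a ∈ C := by
  obtain ⟨P, hP, hvar, -⟩ := exists_convex_projection ⟨_, hy 0⟩ hC.isComplete hconv
  have h1 : Tendsto (fun n => ⟪a - P a, y n - P a⟫) atTop (𝓝 ⟪a - P a, a - P a⟫) := by
    simp only [inner_sub_right (a - P a)]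
    exact (weakConv_iff_inner.1 h _).sub_const _
  have h2 := le_of_tendsto' h1 fun n => hvar a _ (hy n)
  rw [sub_eq_zero.1 (real_inner_self_nonpos.1 h2)]
  exact hP a

/-! ### The fixed point theorem -/

/-- A norm continuous self-map of a closed convex set leaves invariant a nonempty closed convex
separable subset: start from a point, alternately adjoin images under `T` and take convex hulls, and
close up the union. -/
theorem exists_separable_invariant {H : Type*} [NormedAddCommGroup H] [InnerProductSpace ℝ H]
    {C : Set H} (hne : C.Nonempty) (hC : IsClosed C) (hconv : Convex ℝ C) {T : H → H}
    (hT : ContinuousOn T C) (hmaps : MapsTo T C C) :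
    ∃ C₀ ⊆ C, C₀.Nonempty ∧ IsClosed C₀ ∧ Convex ℝ C₀ ∧ TopologicalSpace.IsSeparable C₀ ∧
      MapsTo T C₀ C₀ := by
  obtain ⟨y₀, hy₀⟩ := hne
  let S : ℕ → Set H := fun n => Nat.rec (motive := fun _ => Set H) {y₀} (fun _ s => convexHull ℝ (s ∪ T '' s)) n
  have hsucc : ∀ n, S (n + 1) = convexHull ℝ (S n ∪ T '' S n) := fun n => rfl
  have hSC : ∀ n, S n ⊆ C := by
    intro n
    induction n with
    | zero => exact singleton_subset_iff.2 hy₀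
    | succ n ih =>
      rw [hsucc]
      exact convexHull_min (union_subset ih (hmaps.mono_left ih).image_subset) hconv
  have hSconv : ∀ n, Convex ℝ (S n) := by
    rintro (_ | n)
    · exact convex_singleton y₀
    · exact convex_convexHull ℝ _
  have hSmono : Monotone S := monotone_nat_of_le_succ fun n =>
    subset_union_left.trans (subset_convexHull ℝ _)
  have hST : ∀ n, T '' S n ⊆ S (n + 1) := fun n =>
    subset_union_right.trans (subset_convexHull ℝ _)
  have hSsep : ∀ n, TopologicalSpace.IsSeparable (S n) := by
    intro n
    induction n with
    | zero => exact (countable_singleton y₀).isSeparable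
    | succ n ih =>
      have himg : TopologicalSpace.IsSeparable (T '' S n) := by
        have h1 : TopologicalSpace.IsSeparable (univ : Set ↥(S n)) := by
          have := ih.separableSpace
          exact TopologicalSpace.isSeparable_univ_iff.2 this
        have h2 := h1.image (continuousOn_iff_continuous_domRestrict.1 (hT.mono (hSC n)))
        rwa [image_univ, range_domRestrict] at h2
      exact (ih.union himg).span (R := ℝ) |>.mono
        (convexHull_min Submodule.subset_span (Submodule.convex _))
  have hUconv : Convex ℝ (⋃ n, S n) := (hSmono.directed_le).convex_iUnion hSconv
  have hUC : closure (⋃ n, S n) ⊆ C := closure_minimal (iUnion_subset hSC) hC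
  refine ⟨closure (⋃ n, S n), hUC, ⟨y₀, subset_closure (mem_iUnion.2 ⟨0, rfl⟩)⟩,
    isClosed_closure, hUconv.closure, (TopologicalSpace.IsSeparable.iUnion hSsep).closure, ?_⟩
  refine MapsTo.closure_of_continuousOn (fun x hx => ?_) (hT.mono hUC)
  obtain ⟨n, hn⟩ := mem_iUnion.1 hx
  exact mem_iUnion.2 ⟨n + 1, hST n (mem_image_of_mem T hn)⟩

/-- A self-map `T` of a closed bounded convex set has a fixed point if `id - T` is sequentially
continuous from the weak to the norm topology. -/
theorem exists_fixedPoint_of_weakConv {H : Type*} [NormedAddCommGroup H] [InnerProductSpace ℝ H]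
    [CompleteSpace H] {C : Set H} (hne : C.Nonempty) (hC : IsClosed C) (hconv : Convex ℝ C)
    (hbdd : Bornology.IsBounded C) {T : H → H} (hmaps : MapsTo T C C)
    (hseq : ∀ (y : ℕ → H) (a : H), (∀ n, y n ∈ C) → a ∈ C → WeakConv y a →
      Tendsto (fun n => y n - T (y n)) atTop (𝓝 (a - T a))) :
    ∃ y ∈ C, T y = y := by
  have hAcont : ContinuousOn (fun x => x - T x) C := by
    rw [continuousOn_iff_continuous_domRestrict, continuous_iff_seqContinuous]
    intro y a hya
    exact hseq (fun n => y n) a (fun n => (y n).2) a.2 fun φ =>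
      (φ.continuous.tendsto _).comp ((continuous_subtype_val.tendsto a).comp hya)
  have hTcont : ContinuousOn T C := by
    exact (continuousOn_id.sub hAcont).congr fun x _ => by simp
  obtain ⟨C₀, hC₀C, hne₀, hC₀, hconv₀, hsep₀, hmaps₀⟩ :=
    exists_separable_invariant hne hC hconv hTcont hmaps
  obtain ⟨D, hDC, hDcount, hDdense⟩ := hsep₀.exists_countable_dense_subset
  have hDne : D.Nonempty := closure_nonempty_iff.1 (hne₀.mono hDdense)
  obtain ⟨d, rfl⟩ := hDcount.exists_eq_range hDne
  -- Galerkin approximation: solve the variational inequality on the hull of finitely many `d i`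
  have hhull : ∀ n, convexHull ℝ (d '' Iic n) ⊆ C₀ := fun n =>
    convexHull_min ((image_subset_range _ _).trans hDC) hconv₀
  choose y hy hvar using fun n => exists_variational_solution (F := d '' Iic n)
    ((finite_Iic n).image d) (nonempty_Iic.image d) (hAcont.mono ((hhull n).trans hC₀C))
  obtain ⟨R, hR⟩ := hbdd.exists_norm_le
  obtain ⟨a, φ, hφ, hweak⟩ := exists_weakConv_subseq fun n => hR _ (hC₀C (hhull n (hy n)))
  have ha : a ∈ C₀ := hweak.mem_of_closed_convex hC₀ hconv₀ fun n => hhull _ (hy _)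
  have hstrong := hseq _ a (fun n => hC₀C (hhull _ (hy (φ n)))) (hC₀C ha) hweak
  have hlim : ∀ z, Tendsto (fun n => ⟪y (φ n) - T (y (φ n)), z - y (φ n)⟫) atTop
      (𝓝 ⟪a - T a, z - a⟫) := by
    intro z
    have h1 : Tendsto (fun n => ⟪a - T a, z - y (φ n)⟫) atTop (𝓝 ⟪a - T a, z - a⟫) := by
      simp only [inner_sub_right (a - T a)]
      exact (weakConv_iff_inner.1 hweak _).const_sub _
    have h2 : Tendsto (fun n => ⟪y (φ n) - T (y (φ n)) - (a - T a), z - y (φ n)⟫) atTop (𝓝 0) := by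
      have h3 : Tendsto (fun n => ‖y (φ n) - T (y (φ n)) - (a - T a)‖ * (‖z‖ + R)) atTop
          (𝓝 0) := by
        have := (tendsto_iff_norm_sub_tendsto_zero.1 hstrong).mul_const (‖z‖ + R)
        simpa using this
      refine squeeze_zero_norm (fun n => (norm_inner_le_norm _ _).trans ?_) h3
      gcongr
      exact (norm_sub_le _ _).trans (by gcongr; exact hR _ (hC₀C (hhull _ (hy _))))
    have h4 := h1.add h2
    rw [add_zero] at h4
    refine h4.congr fun n => ?_
    rw [← inner_add_left, add_sub_cancel]
  have hd : ∀ i, 0 ≤ ⟪a - T a, d i - a⟫ := fun i => by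
    refine ge_of_tendsto (hlim (d i)) ?_
    filter_upwards [eventually_ge_atTop i] with n hn
    exact hvar (φ n) _ (subset_convexHull ℝ _ (mem_image_of_mem d (hn.trans (hφ.id_le n))))
  have hall : ∀ z ∈ closure (range d), 0 ≤ ⟪a - T a, z - a⟫ := by
    intro z hz
    have hcl : IsClosed {z : H | 0 ≤ ⟪a - T a, z - a⟫} :=
      isClosed_le continuous_const (by fun_prop)
    have hsub : range d ⊆ {z : H | 0 ≤ ⟪a - T a, z - a⟫} := range_subset_iff.2 hd
    exact closure_minimal hsub hcl hz
  refine ⟨a, hC₀C ha, ?_⟩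
  have h := hall _ (hDdense (hmaps₀ ha))
  rw [← neg_sub a (T a), inner_neg_right, Left.nonneg_neg_iff] at h
  exact (sub_eq_zero.1 (real_inner_self_nonpos.1 h)).symm

theorem WeaklyCompact.isClosed {H : Type*} [NormedAddCommGroup H] [InnerProductSpace ℝ H]
    {C : Set H} (h : WeaklyCompact C) : IsClosed C := by
  have h1 := (IsCompact.isClosed h).preimage (toWeakSpaceCLM ℝ H).continuous
  rwa [preimage_image_eq _ toWeakSpaceCLM_bijective.injective] at h1

/-- Weakly compact sets are bounded, by the uniform boundedness principle. -/
theorem WeaklyCompact.isBounded {H : Type*} [NormedAddCommGroup H] [InnerProductSpace ℝ H]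
    [CompleteSpace H] {C : Set H} (h : WeaklyCompact C) : Bornology.IsBounded C := by
  obtain ⟨R, hR⟩ := banach_steinhaus (g := fun x : C => innerSL ℝ (x : H)) fun v => by
    have hcont : Continuous fun x : WeakSpace ℝ H => innerSL ℝ v ((toWeakSpace ℝ H).symm x) :=
      WeakBilin.eval_continuous (topDualPairing ℝ H).flip (innerSL ℝ v)
    obtain ⟨R, hR⟩ := IsCompact.exists_bound_of_continuousOn h hcont.continuousOn
    refine ⟨R, fun x => ?_⟩
    have := hR _ (mem_image_of_mem _ x.2)
    rw [innerSL_apply_apply, real_inner_comm]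
    exact this
  refine isBounded_iff_forall_norm_le.2 ⟨R, fun x hx => ?_⟩
  simpa using hR ⟨x, hx⟩

theorem stmt7 {H : Type*} [NormedAddCommGroup H] [InnerProductSpace ℝ H] [CompleteSpace H]
    (K : Set H) (hne : K.Nonempty) (f g : H → H) (hfg : f '' K ⊆ g '' K)
    (hcomp : WeaklyCompact (g '' K)) (hconv : Convex ℝ (g '' K))
    (hseq : ∀ (u : ℕ → H) (x : H), (∀ n, u n ∈ K) → x ∈ K →
      WeakConv (fun n => g (u n)) (g x) →
      Filter.Tendsto (fun n => g (u n) - f (u n)) Filter.atTop (nhds (g x - f x))) :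
    ∃ x ∈ K, f x = g x := by
  classical
  have hinv : ∀ y : H, ∃ x, y ∈ g '' K → x ∈ K ∧ g x = y := fun y => by
    by_cases h : y ∈ g '' K
    · obtain ⟨x, hx⟩ := h
      exact ⟨x, fun _ => hx⟩
    · exact ⟨y, fun h' => absurd h' h⟩
  choose s hs using hinv
  obtain ⟨y, hy, hfix⟩ := exists_fixedPoint_of_weakConv (hne.image g) hcomp.isClosed hconv
    hcomp.isBounded (T := fun y => f (s y))
    (fun y hy => hfg (mem_image_of_mem f (hs y hy).1)) fun y a hy ha hya => by
      have h := hseq (fun n => s (y n)) (s a) (fun n => (hs _ (hy n)).1) (hs a ha).1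
        (by simpa only [(hs _ (hy _)).2, (hs a ha).2] using hya)
      simpa only [(hs _ (hy _)).2, (hs a ha).2] using h
  exact ⟨s y, (hs y hy).1, hfix.trans (hs y hy).2.symm⟩
end

section
/- Let H be a real Hilbert space, K ⊆ H weakly compact, f, g : K → H with g weak-to-weak sequentially continuous, g(K) convex, and f(K) ⊆ g(K). Suppose that for every sequence (xₙ) ⊆ K, weak convergence of (g(xₙ)) to g(x) ∈ g(K) implies norm convergence of (g(xₙ) − f(xₙ)) to g(x) − f(x). Then there exists x ∈ K with f(x) = g(x). -/
/-!
Let `C = g '' K` and let `s` be a section of `g` over `C`. Then `T y = y - f (s y)` is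
weak-to-norm sequentially continuous on the convex set `C`, the map `id - T` sends `C` to `C`, and a
zero of `T` gives the required point. The set `C` is weakly sequentially compact because `K` is
(`WeaklyCompact.exists_subseq`).

For finitely many `z i ∈ C`, Brouwer's theorem on a simplex gives `y ∈ C` with
`0 ≤ ⟪T y, z i - y⟫` for all `i` (`finite_variational`). Choosing recursively `y n` in this way
against the points `y m - T (y m)`, `m < n`, and passing to a weak limit `x` of a subsequence, first
in `n` and then in `m`, gives `0 ≤ ⟪T x, (x - T x) - x⟫ = -‖T x‖ ^ 2`, hence `T x = 0`
(`exists_zero_of_weakly_seq_compact`).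

Brouwer's theorem is obtained from Scarf's lemma on families of linear orders (`scarf`), a
parity argument, applied to the grid points of the simplex ordered by their coordinates
(`simplex_approx`), and a compactness argument (`simplex_zero`).
-/

open Filter Topology RealInnerProductSpace

section Scarf

/-! ### Scarf's lemma -/

/-- A finite set `S` is dominant for the (linear, when injective) orders `w i` if every element `t` of
the ground type lies below all of `S` in at least one of these orders. -/
def Dom {ι α : Type*} (w : ι → α → ℕ) (S : Finset α) : Prop :=
  ∀ t, ∃ i, ∀ x ∈ S, w i t ≤ w i x

theorem Dom.mono {ι α : Type*} {w : ι → α → ℕ} {S S' : Finset α} (h : Dom w S) (hs : S' ⊆ S) :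
    Dom w S' := fun t => (h t).imp fun _ hi x hx => hi x (hs hx)

/-- A dominant `S` with `|S| + 1 = |ι|` consists of the minima `m i` of `S` in the orders `w i`, and
exactly two of these minima, for indices `i` and `j`, coincide. For `k = i` or `k = j`, consider the
`x` above `m l` in every order `l ≠ k`: the dominant one-point extensions of `S` are those by the
`w k`-largest such `x`. -/
theorem Dom.exists_pair {ι α : Type*} [Fintype ι] [DecidableEq ι] [DecidableEq α]
    {w : ι → α → ℕ} (hw : ∀ i, Function.Injective (w i)) {S : Finset α} (hS : Dom w S)
    (hcard : S.card + 1 = Fintype.card ι) {m : ι → α} (hmS : ∀ i, m i ∈ S)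
    (hm : ∀ i, ∀ x ∈ S, w i (m i) ≤ w i x) :
    ∃ i j, i ≠ j ∧ m i = m j ∧ ∀ x, (x ∉ S ∧ Dom w (insert x S)) ↔
      ∃ k, (k = i ∨ k = j) ∧ (∀ l, l ≠ k → w l (m l) < w l x) ∧
        ∀ t, (∀ l, l ≠ k → w l (m l) < w l t) → w k t ≤ w k x := by
  obtain ⟨i, -, j, -, hij, hmij⟩ := Finset.exists_ne_map_eq_of_card_lt_of_maps_to
    (s := (Finset.univ : Finset ι)) (t := S) (by rw [Finset.card_univ]; omega) (f := m)
    (fun i _ => hmS i)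
  refine ⟨i, j, hij, hmij, fun x => ⟨?_, ?_⟩⟩
  · rintro ⟨hxS, hD⟩
    obtain ⟨k, hk⟩ := hD x
    -- `x` is the minimum of `insert x S` in the order `k`, so each `y ∈ S` is the minimum in an
    -- order `L y ≠ k`; by counting, `L` is a bijection from `S` onto the indices other than `k`.
    have hl : ∀ y : S, ∃ l, l ≠ k ∧ m l = y ∧ w l y < w l x := by
      rintro ⟨y, hy⟩
      obtain ⟨l, hl⟩ := hD y
      have hyx : y ≠ x := fun h => hxS (h ▸ hy)
      have h1 : w l y < w l x := lt_of_le_of_ne (hl x (by simp)) fun h => hyx (hw l h)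
      refine ⟨l, ?_, ?_, h1⟩
      · rintro rfl
        exact absurd (hk y (by simp [hy])) (not_le.2 h1)
      · exact hw l (le_antisymm (hm l y hy) (hl _ (by simp [hmS])))
    choose L hLk hLm hLx using hl
    have hsurj : ∀ l, l ≠ k → ∃ y, L y = l := by
      have hinj : Function.Injective (fun y : S => (⟨L y, hLk y⟩ : {l // l ≠ k})) := by
        intro y y' h
        have h' : L y = L y' := congrArg Subtype.val h
        exact Subtype.ext (by rw [← hLm y, ← hLm y', h'])
      have hb : Function.Bijective (fun y : S => (⟨L y, hLk y⟩ : {l // l ≠ k})) := by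
        rw [Fintype.bijective_iff_injective_and_card]
        refine ⟨hinj, ?_⟩
        rw [Fintype.card_coe, Fintype.card_subtype_compl, Fintype.card_subtype_eq]
        omega
      intro l hl
      obtain ⟨y, hy⟩ := hb.2 ⟨l, hl⟩
      exact ⟨y, congrArg Subtype.val hy⟩
    refine ⟨k, ?_, ?_, ?_⟩
    · by_contra! hcon
      obtain ⟨y, hy⟩ := hsurj i (Ne.symm hcon.1)
      obtain ⟨y', hy'⟩ := hsurj j (Ne.symm hcon.2)
      have h1 := hLm y
      have h2 := hLm y'
      rw [hy] at h1
      rw [hy'] at h2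
      have : y = y' := Subtype.ext (by rw [← h1, ← h2, hmij])
      exact hij (by rw [← hy, ← hy', this])
    · intro l hl
      obtain ⟨y, rfl⟩ := hsurj l hl
      rw [hLm]
      exact hLx y
    · intro t ht
      obtain ⟨i', hi'⟩ := hD t
      by_cases h : i' = k
      · subst h; exact hi' x (by simp)
      · exact absurd (hi' (m i') (by simp [hmS])) (not_le.2 (ht i' h))
  · rintro ⟨k, hk, hx, hmax⟩
    -- Dropping the order `k` loses no minimum, since `m i = m j` and `k` is `i` or `j`.
    have hsurj : ∀ y ∈ S, ∃ l, l ≠ k ∧ m l = y := by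
      intro y hy
      obtain ⟨l, hl⟩ := hS y
      have hly : m l = y := hw l (le_antisymm (hm l y hy) (hl _ (hmS l)))
      by_cases h : l = k
      · rcases hk with hk | hk
        · exact ⟨j, fun e => hij (by rw [e, hk]), by rw [← hmij, ← hly, h, hk]⟩
        · exact ⟨i, fun e => hij (by rw [e, hk]), by rw [hmij, ← hly, h, hk]⟩
      · exact ⟨l, h, hly⟩
    refine ⟨fun hxS => ?_, fun t => ?_⟩
    · obtain ⟨l, hl, hlx⟩ := hsurj x hxS
      have := hx l hl
      rw [hlx] at this
      exact lt_irrefl _ this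
    · by_cases ht : ∀ l, l ≠ k → w l (m l) < w l t
      · refine ⟨k, fun y hy => ?_⟩
        rcases Finset.mem_insert.1 hy with rfl | hy
        · exact hmax t ht
        · obtain ⟨i', hi'⟩ := hS t
          by_cases h : i' = k
          · subst h; exact hi' y hy
          · exact absurd (hi' (m i') (hmS i')) (not_le.2 (ht i' h))
      · push Not at ht
        obtain ⟨l, hl, hlt⟩ := ht
        refine ⟨l, fun y hy => hlt.trans ?_⟩
        rcases Finset.mem_insert.1 hy with rfl | hy
        · exact (hx l hl).le
        · exact hm l y hy

/-- The number of dominant one-point extensions of `S`: one for each of the two colliding indices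
`k` for which some `x` lies above `m l` in every order `l ≠ k`. -/
theorem Dom.card_eq {ι α : Type*} [Fintype ι] [DecidableEq ι] [Fintype α] [DecidableEq α]
    {w : ι → α → ℕ} (hw : ∀ i, Function.Injective (w i)) {S : Finset α} (hS : Dom w S)
    (hcard : S.card + 1 = Fintype.card ι) {m : ι → α} (hmS : ∀ i, m i ∈ S)
    (hm : ∀ i, ∀ x ∈ S, w i (m i) ≤ w i x) (P : Finset α)
    (hP : ∀ x, x ∈ P ↔ x ∉ S ∧ Dom w (insert x S)) :
    ∃ i j, i ≠ j ∧ m i = m j ∧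
      (((∃ x, ∀ l, l ≠ i → w l (m l) < w l x) → (∃ x, ∀ l, l ≠ j → w l (m l) < w l x) →
        P.card = 2) ∧
      ((∃ x, ∀ l, l ≠ i → w l (m l) < w l x) → (¬ ∃ x, ∀ l, l ≠ j → w l (m l) < w l x) →
        P.card = 1) ∧
      ((¬ ∃ x, ∀ l, l ≠ i → w l (m l) < w l x) → (∃ x, ∀ l, l ≠ j → w l (m l) < w l x) →
        P.card = 1)) := by
  classical
  obtain ⟨i, j, hij, hmij, H⟩ := hS.exists_pair hw hcard hmS hm
  have hmax : ∀ k, (∃ x, ∀ l, l ≠ k → w l (m l) < w l x) →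
      ∃ x, (∀ l, l ≠ k → w l (m l) < w l x) ∧
        ∀ t, (∀ l, l ≠ k → w l (m l) < w l t) → w k t ≤ w k x := by
    rintro k ⟨x, hx⟩
    obtain ⟨y, hy, hy'⟩ := Finset.exists_max_image
      (Finset.univ.filter fun x => ∀ l, l ≠ k → w l (m l) < w l x) (w k) ⟨x, by simpa using hx⟩
    exact ⟨y, by simpa using hy, fun t ht => hy' t (by simpa using ht)⟩
  refine ⟨i, j, hij, hmij, fun hi hj => ?_, fun hi hj => ?_, fun hi hj => ?_⟩
  · obtain ⟨x, hx, hx'⟩ := hmax i hi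
    obtain ⟨y, hy, hy'⟩ := hmax j hj
    have hxy : x ≠ y := by
      rintro rfl
      obtain ⟨l, hl⟩ := hS x
      have h1 := hl _ (hmS l)
      by_cases h : l = i
      · exact absurd (hy l (h ▸ hij)) (not_lt.2 h1)
      · exact absurd (hx l h) (not_lt.2 h1)
    rw [Finset.card_eq_two]
    refine ⟨x, y, hxy, Finset.ext fun z => ?_⟩
    rw [hP, H]
    simp only [Finset.mem_insert, Finset.mem_singleton]
    constructor
    · rintro ⟨k, rfl | rfl, hz, hz'⟩
      · exact Or.inl (hw k (le_antisymm (hx' z hz) (hz' x hx)))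
      · exact Or.inr (hw k (le_antisymm (hy' z hz) (hz' y hy)))
    · rintro (rfl | rfl)
      · exact ⟨i, Or.inl rfl, hx, hx'⟩
      · exact ⟨j, Or.inr rfl, hy, hy'⟩
  · obtain ⟨x, hx, hx'⟩ := hmax i hi
    rw [Finset.card_eq_one]
    refine ⟨x, Finset.ext fun z => ?_⟩
    rw [hP, H, Finset.mem_singleton]
    constructor
    · rintro ⟨k, rfl | rfl, hz, hz'⟩
      · exact hw k (le_antisymm (hx' z hz) (hz' x hx))
      · exact absurd ⟨z, hz⟩ hj
    · rintro rfl
      exact ⟨i, Or.inl rfl, hx, hx'⟩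
  · obtain ⟨y, hy, hy'⟩ := hmax j hj
    rw [Finset.card_eq_one]
    refine ⟨y, Finset.ext fun z => ?_⟩
    rw [hP, H, Finset.mem_singleton]
    constructor
    · rintro ⟨k, rfl | rfl, hz, hz'⟩
      · exact absurd ⟨z, hz⟩ hi
      · exact hw k (le_antisymm (hy' z hz) (hz' y hy))
    · rintro rfl
      exact ⟨j, Or.inr rfl, hy, hy'⟩

/-- Parity argument: `P` is the set of pairs (a dominant `S` of size `|ι| - 1` whose colours are all
but `i₀`, a dominant one-point extension). If no dominant set carried all colours, exchanging the new
point with the point of `S` of the same colour would be a fixed-point free involution of `P`. -/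
theorem Dom.exists_of_odd {ι α : Type*} [Fintype ι] [DecidableEq ι] [Fintype α] [DecidableEq α]
    {w : ι → α → ℕ} (c : α → ι) (i₀ : ι) (P : Finset (Finset α × α))
    (hP : ∀ p, p ∈ P ↔ (Dom w p.1 ∧ p.1.card + 1 = Fintype.card ι ∧
      p.1.image c = Finset.univ.erase i₀) ∧ p.2 ∉ p.1 ∧ Dom w (insert p.2 p.1))
    (hodd : Odd P.card) :
    ∃ R : Finset α, Dom w R ∧ R.image c = Finset.univ := by
  by_contra! hno
  have hz : ∀ p ∈ P, ∃ z ∈ p.1, c z = c p.2 := by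
    intro p hp
    obtain ⟨⟨h1, h2, h3⟩, h4, h5⟩ := (hP p).1 hp
    have : c p.2 ∈ p.1.image c := by
      by_contra hcon
      have e : c p.2 = i₀ := by simpa [h3] using hcon
      refine hno _ h5 ?_
      rw [Finset.image_insert, h3, e, Finset.insert_erase (Finset.mem_univ _)]
    simpa using this
  choose z hzS hzc using hz
  have hinj : ∀ p ∈ P, Set.InjOn c p.1 := by
    intro p hp
    obtain ⟨⟨h1, h2, h3⟩, h4, h5⟩ := (hP p).1 hp
    rw [← Finset.card_image_iff, h3, Finset.card_erase_of_mem (Finset.mem_univ _),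
      Finset.card_univ]
    omega
  have hne : ∀ p (hp : p ∈ P), z p hp ≠ p.2 := by
    intro p hp h
    exact ((hP p).1 hp).2.1 (h ▸ hzS p hp)
  have hmem : ∀ p (hp : p ∈ P), (insert p.2 (p.1.erase (z p hp)), z p hp) ∈ P := by
    intro p hp
    obtain ⟨⟨h1, h2, h3⟩, h4, h5⟩ := (hP p).1 hp
    rw [hP]
    refine ⟨⟨h5.mono (Finset.insert_subset_insert _ (Finset.erase_subset _ _)), ?_, ?_⟩, ?_, ?_⟩
    · rw [Finset.card_insert_of_notMem (by simp [h4]), Finset.card_erase_add_one (hzS p hp)]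
      exact h2
    · dsimp only
      rw [Finset.image_insert, ← hzc p hp, ← Finset.image_insert,
        Finset.insert_erase (hzS p hp), h3]
    · simp [hne p hp]
    · dsimp only
      rw [Finset.insert_comm, Finset.insert_erase (hzS p hp)]
      exact h5
  have hsum : ∑ p ∈ P, (1 : ZMod 2) = 0 := by
    refine Finset.sum_involution (fun p hp => (insert p.2 (p.1.erase (z p hp)), z p hp))
      (fun _ _ => by decide) (fun p hp _ h => hne p hp (congrArg Prod.snd h)) hmem ?_
    intro p hp
    have h4 : p.2 ∉ p.1 := ((hP p).1 hp).2.1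
    have hzz : z _ (hmem p hp) = p.2 := by
      refine hinj _ (hmem p hp) (hzS _ (hmem p hp)) (by simp) ?_
      rw [hzc _ (hmem p hp)]
      exact hzc p hp
    refine Prod.ext ?_ hzz
    dsimp only
    rw [hzz, Finset.erase_insert (by simp [h4]), Finset.insert_erase (hzS p hp)]
  rw [Finset.sum_const, nsmul_eq_mul, mul_one, ZMod.natCast_eq_zero_iff] at hsum
  exact (Nat.not_even_iff_odd.2 hodd) (even_iff_two_dvd.2 hsum)

/-- Scarf's lemma: for linear orders `v i` on a finite set and any colouring `c` by the indices, there
is a finite set `σ` that is dominant for the orders indexed by the colours of `σ` alone. -/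
theorem scarf {ι T : Type*} [Fintype ι] [Fintype T] [Nonempty ι] [Nonempty T]
    [DecidableEq ι] [DecidableEq T]
    (v : ι → T → ℕ) (hv : ∀ i, Function.Injective (v i)) (c : T → ι) :
    ∃ σ : Finset T, ∀ t, ∃ i ∈ σ.image c, ∀ x ∈ σ, v i t ≤ v i x := by
  obtain ⟨i₀⟩ := ‹Nonempty ι›
  rcases subsingleton_or_nontrivial ι with hsub | hnt
  · obtain ⟨x, -, hx⟩ := Finset.exists_max_image (Finset.univ : Finset T) (v i₀)
      Finset.univ_nonempty
    exact ⟨{x}, fun t => ⟨i₀, by simp [Subsingleton.elim (c x) i₀], by simpa using hx t⟩⟩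
  obtain ⟨B, hB⟩ : ∃ B, ∀ i t, v i t < B := by
    obtain ⟨B, hB⟩ := (Set.finite_range (fun p : ι × T => v p.1 p.2)).bddAbove
    exact ⟨B + 1, fun i t => Nat.lt_succ_of_le (hB ⟨(i, t), rfl⟩)⟩
  let e := Fintype.equivFin ι
  -- Adjoin a slack element `inr i` of colour `i` for each index: it is the bottom of the order `i` and
  -- lies above all of `T` in every other order. A set `σ` together with the slacks of the unused indices
  -- is then dominant for all orders iff `σ` is dominant for the used ones.
  let w : ι → T ⊕ ι → ℕ := fun i =>
    Sum.elim (fun t => v i t + 1) (fun j => if j = i then 0 else B + (e j : ℕ) + 1)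
  have wl : ∀ i t, w i (Sum.inl t) = v i t + 1 := fun _ _ => rfl
  have wr0 : ∀ i, w i (Sum.inr i) = 0 := fun i => by simp [w]
  have wr : ∀ i j, j ≠ i → w i (Sum.inr j) = B + (e j : ℕ) + 1 := fun i j h => by simp [w, h]
  have hw : ∀ i, Function.Injective (w i) := by
    rintro i (t | j) (t' | j') h
    · rw [wl, wl] at h
      rw [hv i (Nat.succ_injective h)]
    · exfalso
      have := hB i t
      rcases eq_or_ne j' i with rfl | hj
      · rw [wl, wr0] at h; omega
      · rw [wl, wr _ _ hj] at h; omega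
    · exfalso
      have := hB i t'
      rcases eq_or_ne j i with rfl | hj
      · rw [wl, wr0] at h; omega
      · rw [wl, wr _ _ hj] at h; omega
    · by_cases hj : j = i <;> by_cases hj' : j' = i
      · rw [hj, hj']
      · subst hj; rw [wr0, wr _ _ hj'] at h; omega
      · subst hj'; rw [wr0, wr _ _ hj] at h; omega
      · rw [wr _ _ hj, wr _ _ hj'] at h
        have : e j = e j' := Fin.ext (by omega)
        rw [e.injective this]
  let cc : T ⊕ ι → ι := Sum.elim c id
  classical
  let D : Finset (Finset (T ⊕ ι)) := Finset.univ.filter fun S =>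
    Dom w S ∧ S.card + 1 = Fintype.card ι ∧ S.image cc = Finset.univ.erase i₀
  let N : Finset (T ⊕ ι) → Finset (T ⊕ ι) := fun S =>
    Finset.univ.filter fun x => x ∉ S ∧ Dom w (insert x S)
  -- The only door (dominant, `|ι| - 1` elements, all colours but `i₀`) with an odd number of dominant
  -- extensions.
  let S₀ : Finset (T ⊕ ι) := (Finset.univ.erase i₀).image Sum.inr
  have hS₀mem : ∀ x, x ∈ S₀ ↔ ∃ j, j ≠ i₀ ∧ Sum.inr j = x := by
    intro x; simp [S₀]
  have hS₀ : S₀ ∈ D := by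
    simp only [D, Finset.mem_filter, Finset.mem_univ, true_and]
    refine ⟨?_, ?_, ?_⟩
    · rintro (t | j)
      · refine ⟨i₀, fun x hx => ?_⟩
        obtain ⟨j, hj, rfl⟩ := (hS₀mem x).1 hx
        have := hB i₀ t
        rw [wl, wr _ _ hj]; omega
      · exact ⟨j, fun x _ => by rw [wr0]; exact Nat.zero_le _⟩
    · rw [Finset.card_image_of_injective _ Sum.inr_injective,
        Finset.card_erase_add_one (Finset.mem_univ _), Finset.card_univ]
    · rw [Finset.image_image]
      exact Finset.image_id
  have hne : ∀ S ∈ D, S.Nonempty := by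
    intro S hS
    simp only [D, Finset.mem_filter, Finset.mem_univ, true_and] at hS
    rw [← Finset.card_pos]
    have := Fintype.one_lt_card (α := ι)
    omega
  have hmin : ∀ S ∈ D, ∃ m : ι → T ⊕ ι, (∀ i, m i ∈ S) ∧ ∀ i, ∀ x ∈ S, w i (m i) ≤ w i x := by
    intro S hS
    have : ∀ i, ∃ y ∈ S, ∀ x ∈ S, w i y ≤ w i x := fun i =>
      Finset.exists_min_image S (w i) (hne S hS)
    choose m h1 h2 using this
    exact ⟨m, h1, h2⟩
  have hN : ∀ S x, x ∈ N S ↔ x ∉ S ∧ Dom w (insert x S) := by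
    intro S x; simp [N]
  have hN₀ : (N S₀).card = 1 := by
    obtain ⟨m, hmS, hm⟩ := hmin S₀ hS₀
    have hD := hS₀
    simp only [D, Finset.mem_filter, Finset.mem_univ, true_and] at hD
    obtain ⟨i, j, hij, hmij, -, H1, H2⟩ := hD.1.card_eq hw hD.2.1 hmS hm (N S₀) (hN S₀)
    have hml : ∀ l, l ≠ i₀ → m l = Sum.inr l := by
      intro l hl
      apply hw l
      have := hm l (Sum.inr l) ((hS₀mem _).2 ⟨l, hl, rfl⟩)
      rw [wr0] at this ⊢
      omega
    have hA : ∃ x, ∀ l, l ≠ i₀ → w l (m l) < w l x := by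
      obtain ⟨t⟩ := ‹Nonempty T›
      exact ⟨Sum.inl t, fun l hl => by rw [hml l hl, wr0, wl]; omega⟩
    -- The second colliding index contributes no extension to `S₀`.
    have hE : ∀ j, j ≠ i₀ → m i₀ = m j → ¬ ∃ x, ∀ l, l ≠ j → w l (m l) < w l x := by
      rintro j hj hmj ⟨x, hx⟩
      have h0 := hx i₀ hj.symm
      rw [hmj, hml j hj] at h0
      rcases x with t | k
      · have := hB i₀ t
        rw [wl, wr _ _ hj] at h0; omega
      · rcases eq_or_ne k j with rfl | hk
        · exact lt_irrefl _ h0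
        · have := hx k hk
          rw [wr0] at this; omega
    by_cases hi : i = i₀
    · subst hi
      exact H1 hA (hE j hij.symm hmij)
    · by_cases hj : j = i₀
      · subst hj
        exact H2 (hE i hi hmij.symm) hA
      · rw [hml i hi, hml j hj] at hmij
        exact absurd (Sum.inr_injective hmij) hij
  have hN2 : ∀ S ∈ D, S ≠ S₀ → (N S).card = 2 := by
    intro S hS hSS
    obtain ⟨m, hmS, hm⟩ := hmin S hS
    have hD := hS
    simp only [D, Finset.mem_filter, Finset.mem_univ, true_and] at hD
    have hinl : ∃ t, Sum.inl t ∈ S := by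
      by_contra! hcon
      apply hSS
      ext x
      rw [hS₀mem]
      constructor
      · intro hx
        rcases x with t | k
        · exact absurd hx (hcon t)
        · refine ⟨k, ?_, rfl⟩
          have : cc (Sum.inr k) ∈ S.image cc := Finset.mem_image_of_mem _ hx
          rw [hD.2.2] at this
          exact Finset.ne_of_mem_erase this
      · rintro ⟨k, hk, rfl⟩
        have : k ∈ S.image cc := by rw [hD.2.2]; simp [hk]
        obtain ⟨y, hy, hyk⟩ := Finset.mem_image.1 this
        rcases y with t | k'
        · exact absurd hy (hcon t)
        · have : k' = k := hyk
          exact this ▸ hy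
    obtain ⟨t, ht⟩ := hinl
    -- As `S` meets `T`, all minima of `S` are below the slack of `k`, except possibly in the
    -- order `k`.
    have hA : ∀ k, ∃ x, ∀ l, l ≠ k → w l (m l) < w l x := by
      intro k
      refine ⟨Sum.inr k, fun l hl => ?_⟩
      have h1 := hm l _ ht
      have h2 := hB l t
      rw [wl] at h1
      rw [wr _ _ hl.symm]; omega
    obtain ⟨i, j, hij, hmij, H, -⟩ := hD.1.card_eq hw hD.2.1 hmS hm (N S) (hN S)
    exact H (hA i) (hA j)
  have hodd : Odd (∑ S ∈ D, (N S).card) := by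
    rw [← Finset.add_sum_erase _ _ hS₀, hN₀, Finset.sum_congr rfl (g := fun _ => 2)
      (fun S hS => hN2 S (Finset.mem_of_mem_erase hS) (Finset.ne_of_mem_erase hS))]
    simp
  obtain ⟨R, hR, hRc⟩ := Dom.exists_of_odd (w := w) cc i₀
    ((D.sigma N).map (Equiv.sigmaEquivProd _ _).toEmbedding) (by
      rintro ⟨S, x⟩
      simp [D, N, and_assoc, Equiv.sigmaEquivProd]) (by
      rwa [Finset.card_map, Finset.card_sigma])
  refine ⟨Finset.univ.filter fun t => Sum.inl t ∈ R, fun t => ?_⟩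
  obtain ⟨i, hi⟩ := hR (Sum.inl t)
  refine ⟨i, ?_, fun x hx => ?_⟩
  · have : i ∈ R.image cc := by rw [hRc]; simp
    obtain ⟨y, hy, hyi⟩ := Finset.mem_image.1 this
    rcases y with s | j
    · exact Finset.mem_image.2 ⟨s, by simpa using hy, hyi⟩
    · have : j = i := hyi
      subst this
      have := hi _ hy
      rw [wl, wr0] at this
      omega
  · have := hi (Sum.inl x) (by simpa using hx)
    rw [wl, wl] at this
    omega

end Scarf

/-! ### Brouwer's theorem on the simplex -/

/-- Approximate combinatorial fixed point: near `p`, for every `i` there is a point `q` where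
`ψ q i ≥ 0` or `q i` is tiny. Scarf's lemma is applied to the points of `Δ ∩ (ℤ/N)^ι`. -/
theorem simplex_approx {ι : Type*} [Fintype ι] [Nonempty ι] (ψ : (ι → ℝ) → ι → ℝ)
    (hsum : ∀ x ∈ stdSimplex ℝ ι, ∑ i, ψ x i = 0) (N : ℕ) (hN : 0 < N) :
    ∃ p ∈ stdSimplex ℝ ι, ∀ i, ∃ q ∈ stdSimplex ℝ ι,
      (∀ k, |q k - p k| ≤ (Fintype.card ι : ℝ) / N) ∧
      (0 ≤ ψ q i ∨ q i ≤ (Fintype.card ι : ℝ) / N) := by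
  classical
  let T := {a : ι → Fin (N + 1) // ∑ i, (a i : ℕ) = N}
  have mk : ∀ b : ι → ℕ, ∑ i, b i = N → ∃ a : T, ∀ i, (a.1 i : ℕ) = b i := by
    intro b hb
    refine ⟨⟨fun i => ⟨b i, ?_⟩, hb⟩, fun i => rfl⟩
    have := Finset.single_le_sum (f := b) (fun _ _ => Nat.zero_le _) (Finset.mem_univ i)
    omega
  obtain ⟨i₀⟩ := ‹Nonempty ι›
  have : Nonempty T := by
    obtain ⟨a, -⟩ := mk (Pi.single i₀ N) (by simp)
    exact ⟨a⟩
  have : Nonempty ι := ⟨i₀⟩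
  let pt : T → ι → ℝ := fun a i => ((a.1 i : ℕ) : ℝ) / N
  have hN' : (0 : ℝ) < N := by exact_mod_cast hN
  have hpt : ∀ a, pt a ∈ stdSimplex ℝ ι := by
    intro a
    refine ⟨fun i => by positivity, ?_⟩
    simp only [pt]
    rw [← Finset.sum_div, ← Nat.cast_sum, a.2, div_self hN'.ne']
  have hlab : ∀ a, ∃ i, 0 ≤ ψ (pt a) i := by
    intro a
    by_contra! hcon
    have := Finset.sum_neg (s := Finset.univ) (fun i _ => hcon i) Finset.univ_nonempty
    exact this.ne (hsum _ (hpt a))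
  choose c hc using hlab
  let e := Fintype.equivFin T
  let M := Fintype.card T
  -- The coordinate `i`, with ties broken by an enumeration of `T`.
  let v : ι → T → ℕ := fun i a => (a.1 i : ℕ) * M + e a
  have hle : ∀ i a b, v i a ≤ v i b → (a.1 i : ℕ) ≤ b.1 i := by
    intro i a b h
    by_contra! hcon
    have h1 : ((b.1 i : ℕ) + 1) * M ≤ (a.1 i : ℕ) * M := Nat.mul_le_mul_right _ hcon
    have h2 : (e b : ℕ) < M := (e b).2
    have h3 : (a.1 i : ℕ) * M + e a ≤ (b.1 i : ℕ) * M + e b := h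
    rw [Nat.add_mul] at h1
    omega
  have hv : ∀ i, Function.Injective (v i) := by
    intro i a b h
    have h1 := le_antisymm (hle i a b h.le) (hle i b a h.ge)
    have h2 : (a.1 i : ℕ) * M + e a = (b.1 i : ℕ) * M + e b := h
    rw [h1] at h2
    exact e.injective (Fin.ext (by omega))
  obtain ⟨σ, hσ⟩ := scarf v hv c
  set C := σ.image c with hC
  obtain ⟨i₁, hi₁, -⟩ := hσ (Classical.arbitrary T)
  have hσne : σ.Nonempty := by
    rw [← Finset.image_nonempty (f := c)]; exact ⟨i₁, hi₁⟩
  have hmin : ∀ i, ∃ y ∈ σ, ∀ x ∈ σ, (y.1 i : ℕ) ≤ x.1 i := fun i =>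
    Finset.exists_min_image σ (fun a => (a.1 i : ℕ)) hσne
  choose μ hμσ hμ using hmin
  -- Otherwise there would be room for a grid point exceeding the minima of `σ` in all coordinates
  -- of `C`.
  have key : N < ∑ i ∈ C, (((μ i).1 i : ℕ) + 1) := by
    by_contra! hcon
    set Z := ∑ i ∈ C, (((μ i).1 i : ℕ) + 1) with hZ
    obtain ⟨t, ht⟩ := mk (fun i => if i ∈ C then
      (((μ i).1 i : ℕ) + 1) + (if i = i₁ then N - Z else 0) else 0) (by
        rw [Finset.sum_ite_mem, Finset.univ_inter, Finset.sum_add_distrib,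
          Finset.sum_ite_eq' C i₁, if_pos hi₁, ← hZ]
        omega)
    obtain ⟨i, hi, hit⟩ := hσ t
    have h1 := hle _ _ _ (hit _ (hμσ i))
    rw [ht, if_pos hi] at h1
    omega
  rw [Finset.sum_add_distrib, Finset.sum_const, smul_eq_mul, mul_one] at key
  have hCn : C.card ≤ Fintype.card ι := Finset.card_le_univ C
  have hsub : ∀ (x : T) (E : Finset ι), ∑ i ∈ E, (x.1 i : ℕ) ≤ N := fun x E =>
    (Finset.sum_le_sum_of_subset (Finset.subset_univ E)).trans x.2.le
  have hmono : ∀ x ∈ σ, ∀ E : Finset ι, ∑ i ∈ E, ((μ i).1 i : ℕ) ≤ ∑ i ∈ E, (x.1 i : ℕ) :=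
    fun x hx E => Finset.sum_le_sum fun i _ => hμ i x hx
  have hin : ∀ x ∈ σ, ∀ k ∈ C, (x.1 k : ℕ) ≤ (μ k).1 k + Fintype.card ι := by
    intro x hx k hk
    have h1 := Finset.sum_erase_add C (fun i => ((μ i).1 i : ℕ)) hk
    have h2 := Finset.sum_erase_add C (fun i => (x.1 i : ℕ)) hk
    have h3 := hmono x hx (C.erase k)
    have h4 := hsub x C
    omega
  have hout : ∀ x ∈ σ, ∀ k, k ∉ C → (x.1 k : ℕ) ≤ Fintype.card ι := by
    intro x hx k hk
    have h2 := Finset.sum_insert (f := fun i => (x.1 i : ℕ)) hk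
    have h3 := hmono x hx C
    have h4 := hsub x (insert k C)
    omega
  have hdiff : ∀ x ∈ σ, ∀ y ∈ σ, ∀ k, (x.1 k : ℕ) ≤ y.1 k + Fintype.card ι := by
    intro x hx y hy k
    by_cases hk : k ∈ C
    · have h1 := hin x hx k hk
      have h2 := hμ k y hy
      omega
    · have h1 := hout x hx k hk
      omega
  have hdist : ∀ x ∈ σ, ∀ y ∈ σ, ∀ k, pt x k - pt y k ≤ (Fintype.card ι : ℝ) / N := by
    intro x hx y hy k
    have : ((x.1 k : ℕ) : ℝ) ≤ ((y.1 k : ℕ) : ℝ) + Fintype.card ι := by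
      exact_mod_cast hdiff x hx y hy k
    simp only [pt]
    rw [← sub_div]
    gcongr
    linarith
  obtain ⟨x, hx⟩ := hσne
  refine ⟨pt x, hpt x, fun i => ?_⟩
  by_cases hi : i ∈ C
  · obtain ⟨y, hy, hyi⟩ := Finset.mem_image.1 hi
    refine ⟨pt y, hpt y, fun k => abs_le.2 ⟨?_, hdist y hy x hx k⟩, Or.inl (hyi ▸ hc y)⟩
    have := hdist x hx y hy k
    linarith
  · refine ⟨pt x, hpt x, fun k => by simp; positivity, Or.inr ?_⟩
    have : ((x.1 i : ℕ) : ℝ) ≤ Fintype.card ι := by exact_mod_cast hout x hx i hi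
    simp only [pt]
    gcongr

/-- Equivalent to Brouwer's theorem for a map `F` of the simplex, with `ψ x = F x - x`. -/
theorem simplex_zero {ι : Type*} [Fintype ι] [Nonempty ι] (ψ : (ι → ℝ) → ι → ℝ)
    (hψ : ∀ i, ContinuousOn (fun x => ψ x i) (stdSimplex ℝ ι))
    (hsum : ∀ x ∈ stdSimplex ℝ ι, ∑ i, ψ x i = 0)
    (hb : ∀ x ∈ stdSimplex ℝ ι, ∀ i, x i = 0 → 0 ≤ ψ x i) :
    ∃ x ∈ stdSimplex ℝ ι, ∀ i, ψ x i = 0 := by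
  choose p hp q hq hpq hψq using fun N : ℕ => simplex_approx ψ hsum (N + 1) N.succ_pos
  obtain ⟨x, hx, φ, hφ, hlim⟩ := (isCompact_stdSimplex ℝ ι).tendsto_subseq hp
  have hsmall : Tendsto (fun j => (Fintype.card ι : ℝ) / ((φ j + 1 : ℕ) : ℝ)) atTop (𝓝 0) :=
    ((tendsto_const_div_atTop_nhds_zero_nat (Fintype.card ι : ℝ)).comp
      (tendsto_add_atTop_nat 1)).comp hφ.tendsto_atTop
  have hnn : ∀ i, 0 ≤ ψ x i := by
    intro i
    have hql : Tendsto (fun j => q (φ j) i) atTop (𝓝 x) := by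
      rw [tendsto_pi_nhds] at hlim ⊢
      intro k
      have h1 : Tendsto (fun j => q (φ j) i k - p (φ j) k) atTop (𝓝 0) :=
        squeeze_zero_norm (fun j => hpq (φ j) i k) hsmall
      simpa using h1.add (hlim k)
    have hcont : ContinuousOn (fun y => max (ψ y i) (-(y i))) (stdSimplex ℝ ι) :=
      ContinuousOn.sup (hψ i) (by fun_prop)
    have hl2 : Tendsto (fun j => max (ψ (q (φ j) i) i) (-(q (φ j) i i))) atTop
        (𝓝 (max (ψ x i) (-(x i)))) :=
      (hcont x hx).tendsto.comp (tendsto_nhdsWithin_iff.2 ⟨hql, Eventually.of_forall fun j => hq _ _⟩)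
    -- Both alternatives of the approximate statement are lower bounds for this continuous function.
    have h0 : 0 ≤ max (ψ x i) (-(x i)) := by
      refine le_of_tendsto_of_tendsto' (by rw [← neg_zero]; exact hsmall.neg) hl2 fun j => ?_
      rcases hψq (φ j) i with h | h
      · refine le_max_of_le_left (le_trans ?_ h)
        have : (0 : ℝ) ≤ (Fintype.card ι : ℝ) / ((φ j + 1 : ℕ) : ℝ) := by positivity
        linarith
      · exact le_max_of_le_right (neg_le_neg h)
    rcases le_max_iff.1 h0 with h | h
    · exact h
    · exact hb x hx i (le_antisymm (by linarith) (hx.1 i))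
  refine ⟨x, hx, fun i => ?_⟩
  exact (Finset.sum_eq_zero_iff_of_nonneg (fun i _ => hnn i)).1 (hsum x hx) i (Finset.mem_univ i)

/-- A continuous `χ` on the simplex with `∑ i, x i * χ x i = 0` is nonnegative in all coordinates at
some point: take a fixed point of `x ↦ (x + χ⁻) / (1 + ∑ χ⁻)`. -/
theorem simplex_complementarity {ι : Type*} [Fintype ι] [Nonempty ι] (χ : (ι → ℝ) → ι → ℝ)
    (hχ : ∀ i, ContinuousOn (fun x => χ x i) (stdSimplex ℝ ι))
    (hsum : ∀ x ∈ stdSimplex ℝ ι, ∑ i, x i * χ x i = 0) :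
    ∃ x ∈ stdSimplex ℝ ι, ∀ i, 0 ≤ χ x i := by
  obtain ⟨x, hx, hz⟩ := simplex_zero
    (fun x i => max (-χ x i) 0 - x i * ∑ j, max (-χ x j) 0)
    (fun i => by
      have h : ∀ j, ContinuousOn (fun x => max (-χ x j) 0) (stdSimplex ℝ ι) := fun j =>
        ContinuousOn.sup (hχ j).neg continuousOn_const
      exact (h i).sub ((continuous_apply i).continuousOn.mul
        (continuousOn_finsetSum _ fun j _ => h j)))
    (fun x hx => by
      rw [Finset.sum_sub_distrib, ← Finset.sum_mul, hx.2, one_mul, sub_self])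
    (fun x _ i hi => by simp [hi])
  refine ⟨x, hx, ?_⟩
  set S := ∑ j, max (-χ x j) 0 with hS
  have hS0 : 0 ≤ S := Finset.sum_nonneg fun j _ => le_max_right _ _
  have hz' : ∀ i, max (-χ x i) 0 = x i * S := fun i => sub_eq_zero.1 (hz i)
  have hS1 : S = 0 := by
    by_contra hne
    have hSpos : 0 < S := lt_of_le_of_ne hS0 (Ne.symm hne)
    have hterm : ∀ i, x i * χ x i = -(x i * (x i * S)) := by
      intro i
      rcases (hx.1 i).eq_or_lt with h | h
      · simp [← h]
      · have h1 : 0 < max (-χ x i) 0 := by rw [hz']; positivity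
        have h2 : 0 < -χ x i := by simpa using h1
        rw [← hz' i, max_eq_left h2.le]; ring
    have h2 : ∑ i, x i * (x i * S) = 0 := by
      have := hsum x hx
      simp only [hterm, Finset.sum_neg_distrib] at this
      linarith
    have h3 : ∀ i, x i = 0 := by
      intro i
      have := (Finset.sum_eq_zero_iff_of_nonneg (fun i _ =>
        mul_nonneg (hx.1 i) (mul_nonneg (hx.1 i) hS0))).1 h2 i (Finset.mem_univ i)
      simpa [hne] using this
    have h4 := hx.2
    simp [h3] at h4
  intro i
  have h5 := hz' i
  rw [hS1, mul_zero] at h5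
  have := le_max_left (-χ x i) 0
  linarith

/-! ### Weak convergence in Hilbert spaces and the variational inequality -/

section Hilbert
variable {H : Type*} [NormedAddCommGroup H] [InnerProductSpace ℝ H]

theorem weakConv_of_inner [CompleteSpace H] {u : ℕ → H} {x : H}
    (h : ∀ w : H, Tendsto (fun n => inner ℝ w (u n)) atTop (𝓝 (inner ℝ w x))) :
    WeakConv u x := by
  intro φ
  have := h ((InnerProductSpace.toDual ℝ H).symm φ)
  simpa [InnerProductSpace.toDual_symm_apply] using this

theorem WeakConv.inner_left {u : ℕ → H} {x : H} (h : WeakConv u x) (w : H) :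
    Tendsto (fun n => inner ℝ w (u n)) atTop (𝓝 (inner ℝ w x)) :=
  h (innerSL ℝ w)

theorem WeakConv.of_tendsto {u : ℕ → H} {x : H} (h : Tendsto u atTop (𝓝 x)) : WeakConv u x :=
  fun φ => (φ.continuous.tendsto x).comp h

theorem exists_norm_bound [CompleteSpace H] {κ : Type*} (u : κ → H)
    (h : ∀ w : H, ∃ B, ∀ n, |inner ℝ (u n) w| ≤ B) : ∃ R, ∀ n, ‖u n‖ ≤ R := by
  obtain ⟨R, hR⟩ := banach_steinhaus (g := fun n => innerSL ℝ (u n)) (by simpa using h)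
  exact ⟨R, by simpa using hR⟩

theorem WeakConv.exists_norm_bound [CompleteSpace H] {u : ℕ → H} {x : H} (h : WeakConv u x) :
    ∃ R, ∀ n, ‖u n‖ ≤ R := by
  refine _root_.exists_norm_bound u fun w => ?_
  obtain ⟨B, hB⟩ := (h.inner_left w).norm.bddAbove_range
  exact ⟨B, fun n => by rw [real_inner_comm]; exact hB ⟨n, rfl⟩⟩

/-- The inner product of a norm-convergent and a weakly convergent sequence converges. -/
theorem WeakConv.tendsto_inner [CompleteSpace H] {u p : ℕ → H} {x q : H} (h : WeakConv u x)
    (hp : Tendsto p atTop (𝓝 q)) :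
    Tendsto (fun n => inner ℝ (p n) (u n)) atTop (𝓝 (inner ℝ q x)) := by
  obtain ⟨R, hR⟩ := h.exists_norm_bound
  have h1 : Tendsto (fun n => inner ℝ (p n - q) (u n)) atTop (𝓝 0) := by
    have h2 : Tendsto (fun n => ‖p n - q‖ * R) atTop (𝓝 0) := by
      simpa using (tendsto_iff_norm_sub_tendsto_zero.1 hp).mul_const R
    refine squeeze_zero_norm (fun n => (norm_inner_le_norm _ _).trans ?_) h2
    gcongr
    exact hR n
  have h3 := h1.add (h.inner_left q)
  simpa [inner_sub_left] using h3

/-- The direction of the Eberlein–Šmulian theorem needed here, for Hilbert spaces: weakly compact sets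
are weakly sequentially compact. -/
theorem WeaklyCompact.exists_subseq [CompleteSpace H] {K : Set H} (hK : WeaklyCompact K)
    {u : ℕ → H} (hu : ∀ n, u n ∈ K) :
    ∃ x ∈ K, ∃ φ : ℕ → ℕ, StrictMono φ ∧ WeakConv (u ∘ φ) x := by
  have hcont : ∀ w : H, Continuous fun y : WeakSpace ℝ H =>
      inner ℝ w ((toWeakSpace ℝ H).symm y) := fun w =>
    WeakBilin.eval_continuous (topDualPairing ℝ H).flip (innerSL ℝ w)
  have hbd : ∀ w : H, ∃ B, ∀ n, |inner ℝ (u n) w| ≤ B := by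
    intro w
    obtain ⟨B, hB⟩ := (hK.image (hcont w).norm).bddAbove
    refine ⟨B, fun n => hB ⟨toWeakSpaceCLM ℝ H (u n), ⟨u n, hu n, rfl⟩, ?_⟩⟩
    rw [real_inner_comm]
    rfl
  obtain ⟨R, hR⟩ := exists_norm_bound u hbd
  choose B hB using hbd
  -- Diagonal extraction, as compactness of a countable product of intervals: along `φ` all the
  -- sequences `⟪u n, u k⟫` converge.
  obtain ⟨a, -, φ, hφ, ha⟩ := (isCompact_univ_pi (s := fun k => Set.Icc (-(B (u k))) (B (u k)))
    (fun k => isCompact_Icc)).tendsto_subseq (x := fun n k => inner ℝ (u n) (u k))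
    (fun n k _ => abs_le.1 (hB (u k) n))
  rw [tendsto_pi_nhds] at ha
  obtain ⟨_, ⟨x, hxK, rfl⟩, hx⟩ := hK.exists_mapClusterPt (f := atTop)
    (u := fun n => toWeakSpaceCLM ℝ H (u (φ n)))
    (tendsto_principal.2 (Eventually.of_forall fun n => ⟨u (φ n), hu _, rfl⟩))
  have hclus : ∀ w : H, MapClusterPt (inner ℝ w x) atTop fun n => inner ℝ w (u (φ n)) := fun w =>
    MapClusterPt.continuousAt_comp (X := WeakSpace ℝ H)
      (f := fun y : WeakSpace ℝ H => inner ℝ w ((toWeakSpace ℝ H).symm y))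
      (hcont w).continuousAt hx
  have huniq : ∀ w b, Tendsto (fun n => inner ℝ w (u (φ n))) atTop (𝓝 b) → inner ℝ w x = b := by
    intro w b hb
    exact eq_of_nhds_neBot ((hclus w).clusterPt.mono hb |>.neBot)
  -- The closed subspace of the directions along which the subsequence converges weakly to the cluster
  -- point `x`; it contains every `u k` and everything orthogonal to all of them.
  let V : Submodule ℝ H :=
    { carrier := {w | Tendsto (fun n => inner ℝ w (u (φ n))) atTop (𝓝 (inner ℝ w x))}
      add_mem' := fun {a b} ha hb => by
        simpa only [Set.mem_ofPred_eq, inner_add_left] using ha.add hb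
      zero_mem' := by simp
      smul_mem' := fun c a ha => by
        simpa only [Set.mem_ofPred_eq, real_inner_smul_left] using ha.const_mul c }
  have hVc : IsClosed (V : Set H) := by
    rw [← closure_subset_iff_isClosed]
    intro w hw
    rw [Metric.mem_closure_iff] at hw
    show Tendsto _ _ _
    rw [Metric.tendsto_atTop]
    intro ε hε
    have hRx : 0 < |R| + ‖x‖ + 1 := by positivity
    obtain ⟨b, hb, hwb⟩ := hw (ε / (2 * (|R| + ‖x‖ + 1))) (by positivity)
    obtain ⟨N, hN⟩ := Metric.tendsto_atTop.1 (show Tendsto _ _ _ from hb) (ε / 2) (by positivity)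
    refine ⟨N, fun n hn => ?_⟩
    have h1 := hN n hn
    rw [Real.dist_eq, ← inner_sub_right] at h1 ⊢
    have h2 : inner ℝ w (u (φ n) - x) = inner ℝ (w - b) (u (φ n) - x) + inner ℝ b (u (φ n) - x) := by
      rw [← inner_add_left, sub_add_cancel]
    have h3 : |inner ℝ (w - b) (u (φ n) - x)| ≤ ‖w - b‖ * ‖u (φ n) - x‖ :=
      abs_real_inner_le_norm _ _
    have h4 : ‖u (φ n) - x‖ ≤ |R| + ‖x‖ + 1 := by
      have := norm_sub_le (u (φ n)) x
      have := hR (φ n)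
      have := le_abs_self R
      linarith
    have h5 : ‖w - b‖ * ‖u (φ n) - x‖ ≤ ε / 2 := by
      rw [dist_eq_norm] at hwb
      calc ‖w - b‖ * ‖u (φ n) - x‖ ≤ ε / (2 * (|R| + ‖x‖ + 1)) * (|R| + ‖x‖ + 1) := by gcongr
        _ = ε / 2 := by field_simp
    rw [h2]
    have h6 := abs_add_le (inner ℝ (w - b) (u (φ n) - x)) (inner ℝ b (u (φ n) - x))
    linarith
  have hVu : ∀ k, u k ∈ V := by
    intro k
    have h1 : Tendsto (fun n => inner ℝ (u k) (u (φ n))) atTop (𝓝 (a k)) :=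
      (ha k).congr fun n => real_inner_comm _ _
    show Tendsto _ _ _
    rwa [huniq _ _ h1]
  have hVperp : ∀ w ∈ Vᗮ, w ∈ V := by
    intro w hw
    have h0 : ∀ n, inner ℝ w (u (φ n)) = 0 := fun n => by
      rw [real_inner_comm]; exact hw _ (hVu _)
    have h1 : Tendsto (fun n => inner ℝ w (u (φ n))) atTop (𝓝 0) := by simp [h0]
    show Tendsto _ _ _
    rwa [huniq _ _ h1]
  have : CompleteSpace V := hVc.completeSpace_coe
  refine ⟨x, hxK, φ, hφ, weakConv_of_inner fun w => ?_⟩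
  show w ∈ V
  obtain ⟨y, hy, z, hz, rfl⟩ := V.exists_add_mem_mem_orthogonal w
  exact V.add_mem hy (hVperp z hz)

/-- The variational inequality for `T` tested against finitely many points of `C`. -/
theorem finite_variational {C : Set H} (hC : Convex ℝ C) (T : H → H)
    (hT : ∀ (y : ℕ → H) (x : H), (∀ n, y n ∈ C) → x ∈ C → WeakConv y x →
      Tendsto (fun n => T (y n)) atTop (𝓝 (T x)))
    {ι : Type*} [Fintype ι] [Nonempty ι] (z : ι → H) (hz : ∀ i, z i ∈ C) :
    ∃ y ∈ C, ∀ i, 0 ≤ inner ℝ (T y) (z i - y) := by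
  let Y : (ι → ℝ) → H := fun a => ∑ i, a i • z i
  have hY : Continuous Y := by fun_prop
  have hYC : ∀ a ∈ stdSimplex ℝ ι, Y a ∈ C := fun a ha =>
    hC.sum_mem (fun i _ => ha.1 i) ha.2 fun i _ => hz i
  have hTY : ContinuousOn (fun a => T (Y a)) (stdSimplex ℝ ι) := by
    rw [continuousOn_iff_continuous_domRestrict, continuous_iff_seqContinuous]
    intro a b hab
    refine hT (fun n => Y (a n)) (Y b) (fun n => hYC _ (a n).2) (hYC _ b.2)
      (WeakConv.of_tendsto ?_)
    exact ((hY.comp continuous_subtype_val).tendsto b).comp hab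
  obtain ⟨a, ha, h⟩ := simplex_complementarity (fun a i => inner ℝ (T (Y a)) (z i - Y a))
    (fun i => ContinuousOn.inner hTY (by fun_prop)) (fun a ha => by
      simp only [← real_inner_smul_right]
      rw [← inner_sum]
      simp only [smul_sub, Finset.sum_sub_distrib, ← Finset.sum_smul]
      rw [ha.2, one_smul]
      simp [Y])
  exact ⟨Y a, hYC a ha, h⟩

/-- If `T` is weak-to-norm sequentially continuous on a convex weakly sequentially compact set `C` and
`id - T` maps `C` to itself, then `T` vanishes somewhere on `C`. -/
theorem exists_zero_of_weakly_seq_compact [CompleteSpace H] {C : Set H} (hC : Convex ℝ C)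
    (hne : C.Nonempty) (T : H → H)
    (hcpt : ∀ y : ℕ → H, (∀ n, y n ∈ C) → ∃ x ∈ C, ∃ φ : ℕ → ℕ, StrictMono φ ∧ WeakConv (y ∘ φ) x)
    (hT : ∀ (y : ℕ → H) (x : H), (∀ n, y n ∈ C) → x ∈ C → WeakConv y x →
      Tendsto (fun n => T (y n)) atTop (𝓝 (T x)))
    (hmap : ∀ y ∈ C, y - T y ∈ C) : ∃ y ∈ C, T y = 0 := by
  -- Each new `y n` solves the variational inequality tested against the images under `id - T` of the
  -- earlier terms; in the limit along a weakly convergent subsequence it tests against `x - T x`.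
  obtain ⟨y, hyC, hy⟩ := exists_seq_of_forall_finset_exists (fun y => y ∈ C)
    (fun y' y => 0 ≤ inner ℝ (T y) (y' - T y' - y)) (fun s hs => by
      rcases s.eq_empty_or_nonempty with rfl | hsne
      · obtain ⟨c, hc⟩ := hne
        exact ⟨c, hc, by simp⟩
      · have : Nonempty s := hsne.to_subtype
        obtain ⟨y, hy, h⟩ := finite_variational hC T hT (fun x : s => (x : H) - T x)
          (fun x => hmap _ (hs _ x.2))
        exact ⟨y, hy, fun x hx => h ⟨x, hx⟩⟩)
  obtain ⟨x, hx, φ, hφ, hlim⟩ := hcpt y hyC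
  have hTl : Tendsto (fun n => T (y (φ n))) atTop (𝓝 (T x)) :=
    hT (y ∘ φ) x (fun n => hyC _) hx hlim
  have h1 : ∀ m, 0 ≤ inner ℝ (T x) (y m - T (y m) - x) := by
    intro m
    have hl : Tendsto (fun n => inner ℝ (T (y (φ n))) (y m - T (y m) - y (φ n))) atTop
        (𝓝 (inner ℝ (T x) (y m - T (y m) - x))) := by
      simp only [inner_sub_right (𝕜 := ℝ) _ (y m - T (y m))]
      exact (hTl.inner tendsto_const_nhds).sub (hlim.tendsto_inner hTl)
    refine ge_of_tendsto hl ?_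
    filter_upwards [eventually_gt_atTop m] with n hn
    exact hy m (φ n) (hn.trans_le (hφ.id_le n))
  have h2 : Tendsto (fun n => inner ℝ (T x) (y (φ n) - T (y (φ n)) - x)) atTop
      (𝓝 (inner ℝ (T x) (x - T x - x))) := by
    simp only [inner_sub_right]
    exact ((hlim.inner_left (T x)).sub (tendsto_const_nhds.inner hTl)).sub tendsto_const_nhds
  have h3 := ge_of_tendsto' h2 fun n => h1 (φ n)
  rw [sub_sub_cancel_left, inner_neg_right] at h3
  refine ⟨x, hx, ?_⟩
  rw [real_inner_self_eq_norm_sq] at h3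
  rw [← norm_eq_zero]
  nlinarith [norm_nonneg (T x)]

end Hilbert

theorem stmt8 {H : Type*} [NormedAddCommGroup H] [InnerProductSpace ℝ H] [CompleteSpace H]
    (K : Set H) (hne : K.Nonempty) (f g : H → H)
    (hK : WeaklyCompact K)
    (hg : ∀ (u : ℕ → H) (x : H), (∀ n, u n ∈ K) → x ∈ K →
      WeakConv u x → WeakConv (fun n => g (u n)) (g x))
    (hconv : Convex ℝ (g '' K)) (hfg : f '' K ⊆ g '' K)
    (hseq : ∀ (u : ℕ → H) (x : H), (∀ n, u n ∈ K) → x ∈ K →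
      WeakConv (fun n => g (u n)) (g x) →
      Filter.Tendsto (fun n => g (u n) - f (u n)) Filter.atTop (nhds (g x - f x))) :
    ∃ x ∈ K, f x = g x := by
  -- A section `s` of `g` over `g '' K`; the value `0` off `g '' K` is irrelevant.
  have hs : ∀ y, ∃ x, y ∈ g '' K → x ∈ K ∧ g x = y := fun y => by
    by_cases h : y ∈ g '' K
    · obtain ⟨x, hx⟩ := h
      exact ⟨x, fun _ => hx⟩
    · exact ⟨0, fun h' => absurd h' h⟩
  choose s hs using hs
  obtain ⟨y, hy, hTy⟩ := exists_zero_of_weakly_seq_compact hconv (hne.image g)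
    (fun y => y - f (s y)) (fun y hy => by
      obtain ⟨x, hx, φ, hφ, h⟩ := hK.exists_subseq (u := fun n => s (y n))
        fun n => (hs _ (hy n)).1
      refine ⟨g x, ⟨x, hx, rfl⟩, φ, hφ, ?_⟩
      have := hg _ x (fun n => (hs _ (hy (φ n))).1) hx h
      simpa only [Function.comp_def, (hs _ (hy _)).2] using this)
    (fun y x hy hx h => by
      have := hseq (fun n => s (y n)) (s x) (fun n => (hs _ (hy n)).1) (hs _ hx).1
        (by simpa only [(hs _ (hy _)).2, (hs _ hx).2] using h)
      simpa only [(hs _ (hy _)).2, (hs _ hx).2] using this)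
    (fun y hy => by
      rw [sub_sub_cancel]
      exact hfg ⟨s y, (hs y hy).1, rfl⟩)
  exact ⟨s y, (hs y hy).1, by rw [(hs y hy).2]; exact (sub_eq_zero.1 hTy).symm⟩
end

section
/- Let K ⊆ ℝⁿ and f, g : K → ℝⁿ with f(K) ⊆ g(K), g(K) compact and convex. Suppose that for every sequence (xₙ) ⊆ K, convergence of (g(xₙ)) to g(x) ∈ g(K) implies convergence of (f(xₙ)) to f(x). Then there exists x ∈ K with f(x) = g(x). -/
/-!
The sequential hypothesis says exactly that `g x ↦ f x` is a well defined continuous self-map `h` of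
the compact convex set `g '' K`; a fixed point of `h` is a coincidence point of `f` and `g`. So the
theorem is Brouwer's fixed point theorem for compact convex sets, which is proved here in three
layers.

* `Scarf.exists_rainbow`, a version of Scarf's combinatorial lemma. A finite set `X` carries a
  family of linear orders indexed by `I` (given by injective maps `r i` into a linear order) and a
  colouring by `I`. A set is dominant if no point of `X` lies strictly above its minimum in all the
  orders. Dominant sets of `|I|` elements ("rooms") and of `|I| - 1` elements ("doors") behave like
  the cells and facets of a triangulation: each door lies in exactly two rooms, except for one
  boundary door made of "slack" points. Sperner's parity argument then gives a room with all colours.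
* `brouwer_stdSimplex`: order a fine finite net of the simplex by the coordinates and colour `x` by
  an `i` with `x i ≤ F x i`. The lemma yields a cluster of nearby net points such that every
  coordinate is either a colour that occurs or is close to zero; hence `x i ≤ F x i + ε` for all
  `i`. Compactness gives `x i ≤ F x i` for all `i`, and both sides sum to `1`.
* `brouwer_convex`: approximation by the simplex spanned by a finite `ε`-net of the convex set, with
  Schauder's partition of unity.
-/

namespace Scarf

/-! ### Dominant sets -/

section Dominant

variable {X I α : Type*} [LinearOrder α]

/-- `S` is dominant for the orders `r i` if every point `y` is, for some `i`, weakly below all of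
`S`. -/
def Dom (r : I → X → α) (S : Finset X) : Prop := ∀ y, ∃ i, ∀ x ∈ S, r i y ≤ r i x

/-- `y` exceeds the minimum of `D` strictly in each order other than the `i`-th. -/
def Above (r : I → X → α) (D : Finset X) (i : I) (y : X) : Prop :=
  ∀ j, j ≠ i → ∃ x ∈ D, r j x < r j y

/-- `y` is the `i`-largest point among those satisfying `Above r D i`. -/
def Top (r : I → X → α) (D : Finset X) (i : I) (y : X) : Prop :=
  Above r D i y ∧ ∀ w, Above r D i w → r i w ≤ r i y

variable {r : I → X → α}

lemma Dom.mono {S D : Finset X} (hS : Dom r S) (h : D ⊆ S) : Dom r D := fun y =>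
  (hS y).imp fun _ hi x hx => hi x (h hx)

lemma Top.unique (hr : ∀ i, Function.Injective (r i)) {D : Finset X} {i : I} {y z : X}
    (hy : Top r D i y) (hz : Top r D i z) : y = z :=
  hr i (le_antisymm (hz.2 _ hy.1) (hy.2 _ hz.1))

lemma exists_top [Finite X] {D : Finset X} {i : I} {y : X} (hy : Above r D i y) :
    ∃ z, Top r D i z := by
  obtain ⟨z, hz, hmax⟩ := Set.exists_max_image {w | Above r D i w} (r i) (Set.toFinite _) ⟨y, hy⟩
  exact ⟨z, hz, hmax⟩

lemma Dom.not_above_two {D : Finset X} (hD : Dom r D) {a b : I} (hab : a ≠ b) {y : X}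
    (ha : Above r D a y) (hb : Above r D b y) : False := by
  obtain ⟨i, hi⟩ := hD y
  by_cases h : i = a
  · obtain ⟨x, hx, hlt⟩ := hb i (h ▸ hab)
    exact absurd (hi x hx) (not_le.2 hlt)
  · obtain ⟨x, hx, hlt⟩ := ha i h
    exact absurd (hi x hx) (not_le.2 hlt)

variable [DecidableEq X]

lemma Dom.insert_top {D : Finset X} (hD : Dom r D) {i : I} {y : X} (hy : Top r D i y) :
    Dom r (insert y D) := by
  intro w
  by_cases hw : Above r D i w
  · refine ⟨i, ?_⟩
    obtain ⟨j, hj⟩ := hD w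
    have hji : j = i := by
      by_contra hne
      obtain ⟨x, hx, hlt⟩ := hw j hne
      exact absurd (hj x hx) (not_le.2 hlt)
    subst hji
    intro x hx
    rcases Finset.mem_insert.1 hx with rfl | hx
    · exact hy.2 w hw
    · exact hj x hx
  · unfold Above at hw
    push Not at hw
    obtain ⟨j, hji, hj⟩ := hw
    refine ⟨j, fun x hx => ?_⟩
    rcases Finset.mem_insert.1 hx with rfl | hx
    · obtain ⟨z, hz, hlt⟩ := hy.1 j hji
      exact (hj z hz).trans hlt.le
    · exact hj x hx

/-- In a room each point is the minimum for exactly one index. Hence, when `insert y D` is a room,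
`y` is the top point of `D` for the index `i` of which it is the minimum; and the minima of `D` for
the other indices are pairwise distinct. -/
lemma Dom.top_of_insert [Fintype I] (hr : ∀ i, Function.Injective (r i)) {D : Finset X} {y : X}
    (hy : y ∉ D) (hcard : D.card + 1 = Fintype.card I) (hS : Dom r (insert y D)) :
    ∃ i, Top r D i y ∧ ∀ a b x, a ≠ b → x ∈ D → (∀ z ∈ D, r a x ≤ r a z) →
      (∀ z ∈ D, r b x ≤ r b z) → i = a ∨ i = b := by
  have hex : ∀ i, ∃ x ∈ insert y D, ∀ z ∈ insert y D, r i x ≤ r i z := fun i =>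
    Finset.exists_min_image _ (r i) ⟨y, Finset.mem_insert_self _ _⟩
  choose g hgm hg using hex
  have hsurj : Function.Surjective (fun i => (⟨g i, hgm i⟩ : {x // x ∈ insert y D})) := by
    rintro ⟨x, hx⟩
    obtain ⟨i, hi⟩ := hS x
    exact ⟨i, Subtype.ext (hr i (le_antisymm (hg i x hx) (hi _ (hgm i))))⟩
  have hinj : Function.Injective g := by
    have hb := (Fintype.bijective_iff_surjective_and_card _).2 ⟨hsurj, by
      rw [Fintype.card_coe, Finset.card_insert_of_notMem hy, hcard]⟩
    intro i j hij
    exact hb.1 (Subtype.ext hij)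
  obtain ⟨i, hi⟩ := hsurj ⟨y, Finset.mem_insert_self _ _⟩
  have hi : g i = y := congrArg Subtype.val hi
  have hgD : ∀ j, j ≠ i → g j ∈ D := fun j hj =>
    (Finset.mem_insert.1 (hgm j)).resolve_left fun h => hj (hinj (h.trans hi.symm))
  refine ⟨i, ⟨fun j hj => ⟨g j, hgD j hj, ?_⟩, fun w hw => ?_⟩, ?_⟩
  · refine lt_of_le_of_ne (hg j y (Finset.mem_insert_self _ _)) fun h => hy ?_
    rw [← hr j h]
    exact hgD j hj
  · obtain ⟨j, hj⟩ := hS w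
    have hji : j = i := by
      by_contra hne
      obtain ⟨x, hx, hlt⟩ := hw j hne
      exact absurd (hj x (Finset.mem_insert_of_mem hx)) (not_le.2 hlt)
    subst hji
    exact hj y (Finset.mem_insert_self _ _)
  · intro a b x hab hx ha hb
    by_contra! hne
    have h1 : g a = x := hr a (le_antisymm (hg a x (Finset.mem_insert_of_mem hx))
      (ha _ (hgD a hne.1.symm)))
    have h2 : g b = x := hr b (le_antisymm (hg b x (Finset.mem_insert_of_mem hx))
      (hb _ (hgD b hne.2.symm)))
    exact hab (hinj (h1.trans h2.symm))

/-- By pigeonhole a door has a point that is the minimum for two indices `a` and `b`; the rooms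
containing the door are obtained by adding its top points for `a` and for `b`. -/
lemma Dom.exists_two_tops [Fintype I] (hr : ∀ i, Function.Injective (r i)) {D : Finset X}
    (hD : Dom r D) (hne : D.Nonempty) (hcard : D.card + 1 = Fintype.card I) :
    ∃ a b : I, a ≠ b ∧ (∀ y, Above r D a y ∨ Above r D b y → y ∉ D) ∧
      ∀ y, y ∉ D → Dom r (insert y D) → Top r D a y ∨ Top r D b y := by
  have hex : ∀ i, ∃ x ∈ D, ∀ z ∈ D, r i x ≤ r i z := fun i => Finset.exists_min_image _ (r i) hne
  choose g hgm hg using hex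
  obtain ⟨a, -, b, -, hab, hgab⟩ := Finset.exists_ne_map_eq_of_card_lt_of_maps_to
    (s := (Finset.univ : Finset I)) (t := D) (f := g)
    (by rw [Finset.card_univ]; omega) (fun i _ => hgm i)
  refine ⟨a, b, hab, ?_, ?_⟩
  · intro y hy hyD
    obtain ⟨j, hj⟩ := hD y
    have hyg : y = g j := hr j (le_antisymm (hj _ (hgm j)) (hg j y hyD))
    rcases hy with h | h
    · by_cases hja : j = a
      · obtain ⟨x, hx, hlt⟩ := h b hab.symm
        rw [hyg, hja, hgab] at hlt
        exact absurd (hg b x hx) (not_le.2 hlt)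
      · obtain ⟨x, hx, hlt⟩ := h j hja
        exact absurd (hj x hx) (not_le.2 hlt)
    · by_cases hjb : j = b
      · obtain ⟨x, hx, hlt⟩ := h a hab
        rw [hyg, hjb, ← hgab] at hlt
        exact absurd (hg a x hx) (not_le.2 hlt)
      · obtain ⟨x, hx, hlt⟩ := h j hjb
        exact absurd (hj x hx) (not_le.2 hlt)
  · intro y hy hS
    obtain ⟨i, hi, hiab⟩ := hS.top_of_insert hr hy hcard
    rcases hiab a b (g a) hab (hgm a) (hg a) (by rw [hgab]; exact hg b) with rfl | rfl
    · exact Or.inl hi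
    · exact Or.inr hi

end Dominant

/-! ### The parity argument -/

section Parity

variable {X I α : Type*} [LinearOrder α] [Fintype I] [DecidableEq I]

/-- A dominant set of `|I| - 1` elements carrying each colour other than `i₀` exactly once. -/
def IsDoor (r : I → X → α) (c : X → I) (i₀ : I) (D : Finset X) : Prop :=
  Dom r D ∧ D.card + 1 = Fintype.card I ∧ D.image c = Finset.univ.erase i₀

variable {r : I → X → α} {c : X → I} {i₀ : I}

lemma IsDoor.injOn {D : Finset X} (h : IsDoor r c i₀ D) : Set.InjOn c (D : Set X) := by
  rw [← Finset.card_image_iff, h.2.2, Finset.card_erase_of_mem (Finset.mem_univ _),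
    Finset.card_univ]
  have := h.2.1
  omega

variable [DecidableEq X]

open Classical in
/-- A room missing some colour contains zero or two doors: if it contains one, then exactly two of
its points share a colour, and the doors arise by deleting either of them. -/
lemma even_doors [Fintype X] {S : Finset X} (hS : Dom r S) (hcard : S.card = Fintype.card I)
    (hc : S.image c ≠ Finset.univ) :
    Even (Finset.univ.filter fun D => IsDoor r c i₀ D ∧ D ⊆ S).card := by
  rcases Finset.eq_empty_or_nonempty (Finset.univ.filter fun D => IsDoor r c i₀ D ∧ D ⊆ S)
    with h | ⟨D, hD⟩
  · rw [h]; simp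
  obtain ⟨hD, hDS⟩ := (Finset.mem_filter.1 hD).2
  have hsub : ∀ E, IsDoor r c i₀ E → E ⊆ S → ∃ z ∉ E, insert z E = S := fun E hE hES =>
    Finset.exists_eq_insert_iff.2 ⟨hES, by rw [hE.2.1, hcard]⟩
  obtain ⟨x, hxD, hxS⟩ := hsub D hD hDS
  have hcx : c x ≠ i₀ := by
    intro h
    apply hc
    rw [← hxS, Finset.image_insert, hD.2.2, h, Finset.insert_erase (Finset.mem_univ _)]
  obtain ⟨x', hx'D, hx'⟩ : ∃ x' ∈ D, c x' = c x := by
    rw [← Finset.mem_image, hD.2.2]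
    simpa using hcx
  have hxx' : x ≠ x' := fun h => hxD (h ▸ hx'D)
  have hE' : S.erase x' = insert x (D.erase x') := by
    rw [← hxS, Finset.erase_insert_of_ne hxx']
  have hD' : IsDoor r c i₀ (S.erase x') := by
    refine ⟨hS.mono (Finset.erase_subset _ _), ?_, ?_⟩
    · rw [Finset.card_erase_add_one (hDS hx'D), hcard]
    · rw [hE', Finset.image_insert, ← hx', ← Finset.image_insert, Finset.insert_erase hx'D, hD.2.2]
  have hpair : (Finset.univ.filter fun D => IsDoor r c i₀ D ∧ D ⊆ S) = {D, S.erase x'} := by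
    ext E
    simp only [Finset.mem_filter, Finset.mem_univ, true_and, Finset.mem_insert,
      Finset.mem_singleton]
    constructor
    · rintro ⟨hE, hES⟩
      obtain ⟨z, hzE, hz⟩ := hsub E hE hES
      have hEz : E = S.erase z := by rw [← hz, Finset.erase_insert hzE]
      by_cases h1 : z = x
      · left
        rw [hEz, h1, ← hxS, Finset.erase_insert hxD]
      by_cases h2 : z = x'
      · right
        rw [hEz, h2]
      · exfalso
        refine hxx' (hE.injOn ?_ ?_ hx'.symm)
        · rw [hEz]
          exact Finset.mem_coe.2 (Finset.mem_erase.2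
            ⟨Ne.symm h1, hxS ▸ Finset.mem_insert_self _ _⟩)
        · rw [hEz]
          exact Finset.mem_coe.2 (Finset.mem_erase.2 ⟨Ne.symm h2, hDS hx'D⟩)
    · rintro (rfl | rfl)
      · exact ⟨hD, hDS⟩
      · exact ⟨hD', Finset.erase_subset _ _⟩
  rw [hpair, Finset.card_pair]
  · exact even_two
  · intro h
    exact Finset.notMem_erase x' S (h ▸ hx'D)

variable {s : I → X}

open Classical in
/-- The rooms containing a door, listed by the point that is added. -/
lemma rooms_eq [Fintype X] {D : Finset X} (hD : IsDoor r c i₀ D) {T : Finset X}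
    (hT : ∀ y, y ∈ T ↔ y ∉ D ∧ Dom r (insert y D)) :
    (Finset.univ.filter fun S => (Dom r S ∧ S.card = Fintype.card I) ∧ D ⊆ S).card = T.card := by
  have himg : (Finset.univ.filter fun S => (Dom r S ∧ S.card = Fintype.card I) ∧ D ⊆ S)
      = T.image fun y => insert y D := by
    ext S
    simp only [Finset.mem_filter, Finset.mem_univ, true_and, Finset.mem_image]
    constructor
    · rintro ⟨⟨hS, hcard⟩, hDS⟩
      obtain ⟨z, hz, rfl⟩ := Finset.exists_eq_insert_iff.2 ⟨hDS, by rw [hD.2.1, hcard]⟩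
      exact ⟨z, (hT z).2 ⟨hz, hS⟩, rfl⟩
    · rintro ⟨y, hy, rfl⟩
      obtain ⟨hyD, hS⟩ := (hT y).1 hy
      exact ⟨⟨hS, by rw [Finset.card_insert_of_notMem hyD, hD.2.1]⟩, Finset.subset_insert _ _⟩
  rw [himg, Finset.card_image_of_injOn]
  intro y hy z _ hyz
  have hyD := ((hT y).1 hy).1
  have hyz : insert y D = insert z D := hyz
  have : y ∈ insert z D := hyz ▸ Finset.mem_insert_self y D
  exact (Finset.mem_insert.1 this).resolve_right hyD

open Classical in
/-- A door with a point that is not slack lies in exactly two rooms. -/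
lemma card_rooms_inner [Fintype X] (hr : ∀ i, Function.Injective (r i))
    (hs : ∀ i j, i ≠ j → ∀ y ∉ Set.range s, r i y < r i (s j)) {D : Finset X}
    (hD : IsDoor r c i₀ D) {x : X} (hx : x ∈ D) (hxs : x ∉ Set.range s) :
    (Finset.univ.filter fun S => (Dom r S ∧ S.card = Fintype.card I) ∧ D ⊆ S).card = 2 := by
  obtain ⟨a, b, hab, hnot, honly⟩ := hD.1.exists_two_tops hr ⟨x, hx⟩ hD.2.1
  have habove : ∀ i, Above r D i (s i) := fun i j hj => ⟨x, hx, hs j i hj x hxs⟩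
  obtain ⟨y, hy⟩ := exists_top (habove a)
  obtain ⟨z, hz⟩ := exists_top (habove b)
  have hyz : y ≠ z := by
    rintro rfl
    exact hD.1.not_above_two hab hy.1 hz.1
  rw [rooms_eq hD (T := {y, z}), Finset.card_pair hyz]
  intro w
  rw [Finset.mem_insert, Finset.mem_singleton]
  constructor
  · rintro (rfl | rfl)
    · exact ⟨hnot _ (Or.inl hy.1), hD.1.insert_top hy⟩
    · exact ⟨hnot _ (Or.inr hz.1), hD.1.insert_top hz⟩
  · rintro ⟨hw, hS⟩
    exact (honly w hw hS).imp (fun h => h.unique hr hy) (fun h => h.unique hr hz)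

/-- The boundary door, consisting of all slack points other than `s i₀`. -/
lemma isDoor_slack (hs₀ : ∀ i y, r i (s i) ≤ r i y)
    (hs : ∀ i j, i ≠ j → ∀ y ∉ Set.range s, r i y < r i (s j)) (hcs : ∀ i, c (s i) = i) :
    IsDoor r c i₀ ((Finset.univ.erase i₀).image s) := by
  have hinj : Function.Injective s := Function.LeftInverse.injective hcs
  refine ⟨fun y => ?_, ?_, ?_⟩
  · by_cases hy : y ∈ Set.range s
    · obtain ⟨j, rfl⟩ := hy
      exact ⟨j, fun x _ => hs₀ j x⟩
    · refine ⟨i₀, fun x hx => ?_⟩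
      obtain ⟨j, hj, rfl⟩ := Finset.mem_image.1 hx
      exact (hs i₀ j (Finset.ne_of_mem_erase hj).symm y hy).le
  · rw [Finset.card_image_of_injective _ hinj, Finset.card_erase_add_one (Finset.mem_univ _),
      Finset.card_univ]
  · rw [Finset.image_image]
    rw [show c ∘ s = id from funext hcs, Finset.image_id]

open Classical in
/-- The boundary door lies in exactly one room, which adds its top point for `i₀`. -/
lemma card_rooms_slack [Fintype X] (hr : ∀ i, Function.Injective (r i))
    (hs₀ : ∀ i y, r i (s i) ≤ r i y)
    (hs : ∀ i j, i ≠ j → ∀ y ∉ Set.range s, r i y < r i (s j)) (hcs : ∀ i, c (s i) = i)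
    {y₀ : X} (hy₀ : y₀ ∉ Set.range s) :
    (Finset.univ.filter fun S => (Dom r S ∧ S.card = Fintype.card I) ∧
      (Finset.univ.erase i₀).image s ⊆ S).card = 1 := by
  have hD : IsDoor r c i₀ ((Finset.univ.erase i₀).image s) := isDoor_slack hs₀ hs hcs
  set D := (Finset.univ.erase i₀).image s with hDdef
  have hmem : ∀ j, j ≠ i₀ → s j ∈ D := fun j hj =>
    Finset.mem_image_of_mem s (Finset.mem_erase.2 ⟨hj, Finset.mem_univ _⟩)
  have habove : Above r D i₀ y₀ := fun j hj =>
    ⟨s j, hmem j hj, lt_of_le_of_ne (hs₀ j y₀) fun h => hy₀ ⟨j, hr j h⟩⟩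
  obtain ⟨y, hy⟩ := exists_top habove
  have hyD : y ∉ D := by
    intro h
    obtain ⟨j, hj, rfl⟩ := Finset.mem_image.1 h
    obtain ⟨x, -, hlt⟩ := hy.1 j (Finset.ne_of_mem_erase hj)
    exact absurd (hs₀ j x) (not_le.2 hlt)
  have honly : ∀ i w, w ∉ D → Above r D i w → i = i₀ := by
    intro i w hw hi
    by_contra hne
    obtain ⟨x, hx, hlt⟩ := hi i₀ (Ne.symm hne)
    obtain ⟨j, hj, rfl⟩ := Finset.mem_image.1 hx
    have hws : w ∈ Set.range s := by
      by_contra hws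
      exact absurd hlt (not_lt.2 (hs i₀ j (Finset.ne_of_mem_erase hj).symm w hws).le)
    obtain ⟨l, rfl⟩ := hws
    by_cases hl : l = i₀
    · subst hl
      exact absurd hlt (not_lt.2 (hs₀ l _))
    · exact hw (hmem l hl)
  rw [rooms_eq hD (T := {y}), Finset.card_singleton]
  intro w
  rw [Finset.mem_singleton]
  constructor
  · rintro rfl
    exact ⟨hyD, hD.1.insert_top hy⟩
  · rintro ⟨hw, hS⟩
    obtain ⟨i, hi, -⟩ := hS.top_of_insert hr hw hD.2.1
    obtain rfl := honly i w hw hi.1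
    exact hi.unique hr hy

/-- A dominant set with all colours exists when there are slack points `s i`: `s i` is lowest in the
`i`-th order, higher in all other orders than every point that is not slack, and coloured `i`. -/
lemma exists_rainbow_room [Fintype X] (hr : ∀ i, Function.Injective (r i))
    (hs₀ : ∀ i y, r i (s i) ≤ r i y)
    (hs : ∀ i j, i ≠ j → ∀ y ∉ Set.range s, r i y < r i (s j)) (hcs : ∀ i, c (s i) = i)
    {y₀ : X} (hy₀ : y₀ ∉ Set.range s) :
    ∃ S : Finset X, Dom r S ∧ S.image c = Finset.univ := by
  classical
  by_contra! hno
  let i₀ : I := c y₀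
  let rooms := Finset.univ.filter fun S : Finset X => Dom r S ∧ S.card = Fintype.card I
  let doors := Finset.univ.filter fun D : Finset X => IsDoor r c i₀ D
  have hcount := Finset.sum_card_bipartiteAbove_eq_sum_card_bipartiteBelow
    (s := doors) (t := rooms) (fun D S => D ⊆ S)
  have heven : Even (∑ S ∈ rooms, (doors.bipartiteBelow (fun D S => D ⊆ S) S).card) := by
    refine Finset.even_sum _ fun S hS => ?_
    obtain ⟨hS, hcard⟩ := (Finset.mem_filter.1 hS).2
    have := even_doors (i₀ := i₀) hS hcard (hno S hS)
    rwa [← Finset.filter_filter] at this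
  have habove : ∀ D, (rooms.bipartiteAbove (fun D S => D ⊆ S) D).card
      = (Finset.univ.filter fun S => (Dom r S ∧ S.card = Fintype.card I) ∧ D ⊆ S).card := by
    intro D
    rw [← Finset.filter_filter]
    rfl
  have hD₀ : (Finset.univ.erase i₀).image s ∈ doors :=
    Finset.mem_filter.2 ⟨Finset.mem_univ _, isDoor_slack hs₀ hs hcs⟩
  have hrest : Even (∑ D ∈ doors.erase ((Finset.univ.erase i₀).image s),
      (rooms.bipartiteAbove (fun D S => D ⊆ S) D).card) := by
    refine Finset.even_sum _ fun D hD => ?_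
    obtain ⟨hne, hD⟩ := Finset.mem_erase.1 hD
    have hD := (Finset.mem_filter.1 hD).2
    obtain ⟨x, hx, hxs⟩ : ∃ x ∈ D, x ∉ Set.range s := by
      by_contra! hall
      apply hne
      have hsc : ∀ x ∈ D, s (c x) = x := by
        intro x hx
        obtain ⟨j, rfl⟩ := hall x hx
        rw [hcs]
      rw [← hD.2.2, Finset.image_image]
      ext x
      simp only [Finset.mem_image, Function.comp]
      constructor
      · exact fun hx => ⟨x, hx, hsc x hx⟩
      · rintro ⟨z, hz, rfl⟩
        rwa [hsc z hz]
    rw [habove, card_rooms_inner hr hs hD hx hxs]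
    exact even_two
  rw [← Finset.add_sum_erase _ _ hD₀, habove, card_rooms_slack hr hs₀ hs hcs hy₀] at hcount
  rw [← hcount] at heven
  exact (Nat.not_even_iff_odd.2 (hrest.one_add)) heven

/-- Scarf's lemma for real-valued functions `v i` on a finite set. Ties are broken by an enumeration
of the points, and slack points are adjoined. -/
theorem exists_rainbow {T I : Type*} [Finite T] [Nonempty T] [Finite I] (v : I → T → ℝ)
    (h0 : ∀ i x, 0 ≤ v i x) (h1 : ∀ i x, v i x ≤ 1) (c : T → I) :
    ∃ S : Finset T, ∀ y, ∃ i, (∃ x ∈ S, c x = i) ∧ ∀ x ∈ S, v i y ≤ v i x := by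
  classical
  cases nonempty_fintype T
  cases nonempty_fintype I
  let e := Fintype.equivFin (T ⊕ I)
  let w : I → T ⊕ I → ℝ := fun i => Sum.elim (v i) fun j => if i = j then -1 else 2
  let r : I → T ⊕ I → ℝ ×ₗ Fin (Fintype.card (T ⊕ I)) := fun i x => toLex (w i x, e x)
  have hlt : ∀ i x y, w i x < w i y → r i x < r i y := fun i x y h =>
    Prod.Lex.toLex_lt_toLex.2 (Or.inl h)
  have hle : ∀ i x y, r i x ≤ r i y → w i x ≤ w i y := fun i x y h =>
    not_lt.1 fun h' => absurd (hlt i y x h') (not_lt.2 h)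
  have hr : ∀ i, Function.Injective (r i) := fun i x y h =>
    e.injective (congrArg (fun p => (ofLex p).2) h)
  have hnot : ∀ y : T ⊕ I, y ∉ Set.range (Sum.inr : I → T ⊕ I) → ∃ x, y = Sum.inl x := by
    rintro (x | i) h
    · exact ⟨x, rfl⟩
    · exact absurd ⟨i, rfl⟩ h
  obtain ⟨S, hS, hcS⟩ := exists_rainbow_room (r := r) (s := Sum.inr) (c := Sum.elim c id) hr
    (by
      rintro i (x | j)
      · refine (hlt _ _ _ ?_).le
        have := h0 i x
        simp only [w, Sum.elim_inl, Sum.elim_inr, if_true]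
        linarith
      · by_cases hij : i = j
        · rw [hij]
        · refine (hlt _ _ _ ?_).le
          simp only [w, Sum.elim_inr, if_true, if_neg hij]
          norm_num)
    (by
      intro i j hij y hy
      obtain ⟨x, rfl⟩ := hnot y hy
      refine hlt _ _ _ ?_
      have := h1 i x
      simp only [w, Sum.elim_inl, Sum.elim_inr, if_neg hij]
      linarith)
    (fun i => rfl) (y₀ := Sum.inl (Classical.arbitrary T)) (by simp)
  refine ⟨S.preimage Sum.inl Sum.inl_injective.injOn, fun y => ?_⟩
  obtain ⟨i, hi⟩ := hS (Sum.inl y)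
  refine ⟨i, ?_, fun x hx => hle i _ _ (hi _ (Finset.mem_preimage.1 hx))⟩
  obtain ⟨z, hz, hzi⟩ := Finset.mem_image.1 (hcS ▸ Finset.mem_univ i)
  rcases z with x | j
  · exact ⟨x, Finset.mem_preimage.2 hz, hzi⟩
  · exfalso
    obtain rfl : j = i := hzi
    have := hle j _ _ (hi _ hz)
    have h := h0 j y
    simp only [w, Sum.elim_inl, Sum.elim_inr, if_true] at this
    linarith

end Parity

end Scarf

/-! ### Brouwer's theorem for the standard simplex -/

/-- Approximate form: the colours that occur in the cluster `S` given by `Scarf.exists_rainbow` for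
a fine net of the simplex are the coordinates `i` with `x i ≤ F x i` at a nearby point; the other
coordinates are small on `S`. -/
lemma exists_near_le_of_simplex {ι : Type*} [Fintype ι] [Nonempty ι] {F : (ι → ℝ) → ι → ℝ}
    (hF : Set.MapsTo F (stdSimplex ℝ ι) (stdSimplex ℝ ι)) {δ : ℝ} (hδ : 0 < δ) :
    ∃ x ∈ stdSimplex ℝ ι, ∀ i, x i ≤ δ ∨
      ∃ x' ∈ stdSimplex ℝ ι, dist x x' ≤ δ ∧ x' i ≤ F x' i := by
  classical
  -- A net of mesh `η` with `|ι| * η = δ` makes the cluster have diameter at most `δ`.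
  obtain ⟨η, hη, hηδ⟩ : ∃ η : ℝ, 0 < η ∧ Fintype.card ι * η = δ := by
    have : (0 : ℝ) < Fintype.card ι := by exact_mod_cast Fintype.card_pos
    exact ⟨δ / Fintype.card ι, by positivity, by field_simp⟩
  obtain ⟨t, ht, htfin, hcover⟩ := (isCompact_stdSimplex ℝ ι).finite_cover_balls hη
  have htne : t.Nonempty := by
    obtain ⟨i⟩ := ‹Nonempty ι›
    obtain ⟨y, hy, -⟩ := Set.mem_iUnion₂.1 (hcover (single_mem_stdSimplex ℝ i))
    exact ⟨y, hy⟩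
  have : Finite t := htfin
  have : Nonempty t := htne.to_subtype
  have hcol : ∀ x : t, ∃ i, (x : ι → ℝ) i ≤ F x i := by
    intro x
    by_contra! h
    have hlt := Finset.sum_lt_sum_of_nonempty Finset.univ_nonempty (fun i _ => h i)
    rw [(hF (ht x.2)).2, (ht x.2).2] at hlt
    exact lt_irrefl _ hlt
  choose c hc using hcol
  have hle1 : ∀ x ∈ stdSimplex ℝ ι, ∀ i, x i ≤ 1 := by
    intro x hx i
    rw [← hx.2]
    exact Finset.single_le_sum (fun j _ => hx.1 j) (Finset.mem_univ i)
  obtain ⟨S, hS⟩ := Scarf.exists_rainbow (fun i (x : t) => (x : ι → ℝ) i)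
    (fun i x => (ht x.2).1 i) (fun i x => hle1 _ (ht x.2) i) c
  have hSne : S.Nonempty := by
    obtain ⟨i, ⟨x, hx, -⟩, -⟩ := hS (Classical.arbitrary t)
    exact ⟨x, hx⟩
  let C := S.image c
  have hCne : C.Nonempty := hSne.image c
  let m : ι → ℝ := fun i => if i ∈ C then S.inf' hSne fun x => (x : ι → ℝ) i else 0
  have hm0 : ∀ i, 0 ≤ m i := by
    intro i
    simp only [m]
    split_ifs
    · exact Finset.le_inf' _ _ fun x _ => (ht x.2).1 i
    · exact le_rfl
  have hmS : ∀ x ∈ S, ∀ i, m i ≤ (x : ι → ℝ) i := by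
    intro x hx i
    simp only [m]
    split_ifs
    · exact Finset.inf'_le _ hx
    · exact (ht x.2).1 i
  have hmC : ∀ i, i ∉ C → m i = 0 := fun i hi => if_neg hi
  -- Otherwise raising `m` equally on `C` gives a point of the simplex, and the net point close to
  -- it contradicts dominance of `S`.
  have hsum : 1 - δ ≤ ∑ i, m i := by
    by_contra! hlt
    have hCpos : (0 : ℝ) < C.card := by exact_mod_cast hCne.card_pos
    set q : ℝ := (1 - ∑ i, m i) / C.card with hq
    have hqη : η < q := by
      rw [hq, lt_div_iff₀ hCpos]
      have : (C.card : ℝ) ≤ Fintype.card ι := by exact_mod_cast Finset.card_le_univ C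
      nlinarith
    let z : ι → ℝ := fun i => m i + if i ∈ C then q else 0
    have hz : z ∈ stdSimplex ℝ ι := by
      refine ⟨fun i => ?_, ?_⟩
      · have := hm0 i
        simp only [z]
        split_ifs <;> linarith
      · have hqsum : (∑ i, if i ∈ C then q else 0) = 1 - ∑ i, m i := by
          rw [Finset.sum_ite_mem, Finset.univ_inter, Finset.sum_const, nsmul_eq_mul, hq,
            mul_div_cancel₀ _ hCpos.ne']
        change ∑ i, (m i + if i ∈ C then q else 0) = 1
        rw [Finset.sum_add_distrib, hqsum, add_sub_cancel]
    obtain ⟨y, hyt, hy⟩ := Set.mem_iUnion₂.1 (hcover hz)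
    obtain ⟨i, ⟨x, hx, rfl⟩, hi⟩ := hS ⟨y, hyt⟩
    have hiC : c x ∈ C := Finset.mem_image_of_mem c hx
    have hym : y (c x) ≤ m (c x) := by
      simp only [m, if_pos hiC]
      exact Finset.le_inf' _ _ hi
    have hd := (dist_le_pi_dist z y (c x)).trans_lt (Metric.mem_ball.1 hy)
    rw [Real.dist_eq] at hd
    have := (abs_lt.1 hd).2
    simp only [z, if_pos hiC] at this
    linarith
  have hclose : ∀ x ∈ S, ∀ i, (x : ι → ℝ) i ≤ m i + δ := by
    intro x hx i
    have h := Finset.single_le_sum (f := fun j => (x : ι → ℝ) j - m j)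
      (fun j _ => sub_nonneg.2 (hmS x hx j)) (Finset.mem_univ i)
    rw [Finset.sum_sub_distrib, (ht x.2).2] at h
    linarith
  obtain ⟨x, hx⟩ := hSne
  refine ⟨x, ht x.2, fun i => ?_⟩
  by_cases hi : i ∈ C
  · right
    obtain ⟨x', hx', rfl⟩ := Finset.mem_image.1 hi
    refine ⟨x', ht x'.2, (dist_pi_le_iff hδ.le).2 fun j => ?_, hc x'⟩
    rw [Real.dist_eq, abs_le]
    have h1 := hclose x hx j
    have h2 := hclose x' hx' j
    have h3 := hmS x hx j
    have h4 := hmS x' hx' j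
    constructor <;> linarith
  · left
    have := hclose x hx i
    rwa [hmC i hi, zero_add] at this

theorem brouwer_stdSimplex {ι : Type*} [Fintype ι] [Nonempty ι] {F : (ι → ℝ) → ι → ℝ}
    (hF : Set.MapsTo F (stdSimplex ℝ ι) (stdSimplex ℝ ι))
    (hcont : ContinuousOn F (stdSimplex ℝ ι)) : ∃ x ∈ stdSimplex ℝ ι, F x = x := by
  classical
  have hK := isCompact_stdSimplex ℝ ι
  have happrox : ∀ ε > 0, ∃ x ∈ stdSimplex ℝ ι, ∀ i, x i - F x i ≤ ε := by
    intro ε hε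
    obtain ⟨δ, hδ, hδF⟩ := Metric.uniformContinuousOn_iff.1
      (hK.uniformContinuousOn_of_continuous hcont) (ε / 2) (by positivity)
    obtain ⟨x, hx, h⟩ := exists_near_le_of_simplex hF (δ := min (δ / 2) (ε / 2)) (by positivity)
    refine ⟨x, hx, fun i => ?_⟩
    rcases h i with h | ⟨x', hx', hd, hle⟩
    · have h1 := (hF hx).1 i
      have h2 := min_le_right (δ / 2) (ε / 2)
      linarith
    · have h1 := hd.trans (min_le_left _ _)
      have h2 := hd.trans (min_le_right _ _)
      have h3 := (dist_le_pi_dist (F x) (F x') i).trans_lt (hδF x hx x' hx' (by linarith))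
      have h4 := (dist_le_pi_dist x x' i).trans h2
      rw [Real.dist_eq] at h3 h4
      have h5 := (abs_lt.1 h3).1
      have h6 := (abs_le.1 h4).2
      linarith
  let G : (ι → ℝ) → ℝ := fun x => Finset.univ.sup' Finset.univ_nonempty fun i => x i - F x i
  have hG : ContinuousOn G (stdSimplex ℝ ι) := by
    refine ContinuousOn.finset_sup'_apply _ fun i _ => ?_
    exact (continuous_apply i).continuousOn.sub ((continuous_apply i).comp_continuousOn hcont)
  obtain ⟨x, hx, hmin⟩ := hK.exists_isMinOn
    ⟨_, single_mem_stdSimplex ℝ (Classical.arbitrary ι)⟩ hG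
  have hGx : G x ≤ 0 := by
    refine le_of_forall_pos_le_add fun ε hε => ?_
    obtain ⟨y, hy, h⟩ := happrox ε hε
    rw [zero_add]
    exact (hmin hy).trans (Finset.sup'_le _ _ fun i _ => h i)
  have hle : ∀ i ∈ Finset.univ, x i ≤ F x i := by
    intro i hi
    have := (Finset.le_sup' (fun i => x i - F x i) hi).trans hGx
    linarith
  have heq := (Finset.sum_eq_sum_iff_of_le hle).1 (by rw [hx.2, (hF hx).2])
  exact ⟨x, hx, funext fun i => (heq i (Finset.mem_univ i)).symm⟩

/-! ### Compact convex sets -/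

/-- Approximate form for a given `ε`: with `p j` an `ε`-net of `S` and `φ` the normalised weights
`max 0 (ε - dist z (p j))`, a fixed point `x` of `x ↦ φ (h (∑ x j • p j))` makes `∑ x j • p j` an
average of net points within `ε` of its image. -/
lemma exists_approx_fixed {E : Type*} [NormedAddCommGroup E] [NormedSpace ℝ E] {S : Set E}
    (hne : S.Nonempty) (hcomp : IsCompact S) (hconv : Convex ℝ S) {h : E → E}
    (hmaps : Set.MapsTo h S S) (hcont : ContinuousOn h S) {ε : ℝ} (hε : 0 < ε) :
    ∃ y ∈ S, dist y (h y) ≤ ε := by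
  classical
  obtain ⟨t, ht, htfin, hcover⟩ := hcomp.finite_cover_balls hε
  have htne : t.Nonempty := by
    obtain ⟨z, hz⟩ := hne
    obtain ⟨y, hy, -⟩ := Set.mem_iUnion₂.1 (hcover hz)
    exact ⟨y, hy⟩
  have : Fintype t := htfin.fintype
  have : Nonempty t := htne.to_subtype
  let w : t → E → ℝ := fun j z => max 0 (ε - dist z j)
  have hw0 : ∀ j z, 0 ≤ w j z := fun j z => le_max_left _ _
  have hwc : ∀ j, Continuous (w j) := fun j => by fun_prop
  let W : E → ℝ := fun z => ∑ j, w j z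
  have hWc : Continuous W := continuous_finsetSum _ fun j _ => hwc j
  have hWpos : ∀ z ∈ S, 0 < W z := by
    intro z hz
    obtain ⟨y, hy, hzy⟩ := Set.mem_iUnion₂.1 (hcover hz)
    refine Finset.sum_pos' (fun j _ => hw0 j z) ⟨⟨y, hy⟩, Finset.mem_univ _, ?_⟩
    exact lt_max_of_lt_right (sub_pos.2 (Metric.mem_ball.1 hzy))
  let φ : E → t → ℝ := fun z j => w j z / W z
  have hφc : ContinuousOn φ S := continuousOn_pi.2 fun j =>
    (hwc j).continuousOn.div hWc.continuousOn fun z hz => (hWpos z hz).ne'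
  have hφm : Set.MapsTo φ S (stdSimplex ℝ t) := fun z hz =>
    ⟨fun j => div_nonneg (hw0 j z) (hWpos z hz).le, by
      simp only [φ]
      rw [← Finset.sum_div, div_self (hWpos z hz).ne']⟩
  let b : (t → ℝ) → E := fun x => ∑ j, x j • (j : E)
  have hbc : Continuous b := by fun_prop
  have hbm : Set.MapsTo b (stdSimplex ℝ t) S := fun x hx =>
    hconv.sum_mem (fun j _ => hx.1 j) hx.2 fun j _ => ht j.2
  obtain ⟨x, hx, hfix⟩ := brouwer_stdSimplex (F := fun x => φ (h (b x)))
    (fun x hx => hφm (hmaps (hbm hx)))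
    (hφc.comp (hcont.comp hbc.continuousOn hbm) fun x hx => hmaps (hbm hx))
  refine ⟨b x, hbm hx, ?_⟩
  set z := h (b x) with hz
  have hzS : z ∈ S := hmaps (hbm hx)
  have hdiff : b x - z = ∑ j, x j • ((j : E) - z) := by
    simp only [b, smul_sub, Finset.sum_sub_distrib, ← Finset.sum_smul, hx.2, one_smul]
  rw [dist_eq_norm, hdiff]
  calc ‖∑ j, x j • ((j : E) - z)‖ ≤ ∑ j, x j * ε := by
        refine norm_sum_le_of_le _ fun j _ => ?_
        rw [norm_smul, Real.norm_of_nonneg (hx.1 j)]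
        rcases (hx.1 j).eq_or_lt with h0 | hpos
        · rw [← h0]; simp
        -- A positive weight `x j = φ z j` forces `z` to be within `ε` of `p j`.
        · refine mul_le_mul_of_nonneg_left ?_ hpos.le
          rw [← hfix] at hpos
          have hwpos : 0 < w j z := by
            by_contra hcon
            have : w j z = 0 := le_antisymm (not_lt.1 hcon) (hw0 j z)
            exact hpos.ne' (by simp only [φ, this, zero_div])
          have := (lt_max_iff.1 hwpos).resolve_left (lt_irrefl _)
          rw [← dist_eq_norm, dist_comm]
          linarith
    _ = ε := by rw [← Finset.sum_mul, hx.2, one_mul]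

theorem brouwer_convex {E : Type*} [NormedAddCommGroup E] [NormedSpace ℝ E] {S : Set E}
    (hne : S.Nonempty) (hcomp : IsCompact S) (hconv : Convex ℝ S) {h : E → E}
    (hmaps : Set.MapsTo h S S) (hcont : ContinuousOn h S) : ∃ y ∈ S, h y = y := by
  have hd : ContinuousOn (fun y => dist y (h y)) S := by fun_prop
  obtain ⟨y, hy, hmin⟩ := hcomp.exists_isMinOn hne hd
  have hle : dist y (h y) ≤ 0 := by
    refine le_of_forall_pos_le_add fun ε hε => ?_
    obtain ⟨z, hz, hzε⟩ := exists_approx_fixed hne hcomp hconv hmaps hcont hε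
    rw [zero_add]
    exact (hmin hz).trans hzε
  exact ⟨y, hy, (dist_le_zero.1 hle).symm⟩

theorem stmt10 {n : ℕ} (K : Set (EuclideanSpace ℝ (Fin n))) (hne : K.Nonempty)
    (f g : EuclideanSpace ℝ (Fin n) → EuclideanSpace ℝ (Fin n))
    (hfg : f '' K ⊆ g '' K) (hcomp : IsCompact (g '' K)) (hconv : Convex ℝ (g '' K))
    (hseq : ∀ (u : ℕ → EuclideanSpace ℝ (Fin n)) (x : EuclideanSpace ℝ (Fin n)),
      (∀ m, u m ∈ K) → x ∈ K →
      Filter.Tendsto (fun m => g (u m)) Filter.atTop (nhds (g x)) →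
      Filter.Tendsto (fun m => f (u m)) Filter.atTop (nhds (f x))) :
    ∃ x ∈ K, f x = g x := by
  -- `p z` is a chosen preimage of `z` under `g`; the induced self-map of `g '' K` is `f ∘ p`.
  have hpre : ∀ z, ∃ x, z ∈ g '' K → x ∈ K ∧ g x = z := by
    intro z
    by_cases hz : z ∈ g '' K
    · obtain ⟨x, hx, hxz⟩ := hz
      exact ⟨x, fun _ => ⟨hx, hxz⟩⟩
    · exact ⟨0, fun h => absurd h hz⟩
  choose p hp using hpre
  have hcont : ContinuousOn (fun z => f (p z)) (g '' K) := by
    rw [continuousOn_iff_continuous_domRestrict]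
    refine SeqContinuous.continuous fun v z hv => ?_
    refine hseq (fun m => p (v m)) (p z) (fun m => (hp _ (v m).2).1) (hp _ z.2).1 ?_
    simp only [(hp _ (Subtype.property _)).2]
    exact (continuous_subtype_val.tendsto z).comp hv
  obtain ⟨y, hy, hfix⟩ := brouwer_convex (hne.image g) hcomp hconv
    (fun z hz => hfg (Set.mem_image_of_mem f (hp z hz).1)) hcont
  exact ⟨p y, (hp y hy).1, hfix.trans (hp y hy).2.symm⟩
end
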